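/- Let N ≥ 1, p > 1, s ∈ (0,1] with 1/p < s < N/p, β > 0, α > -sp, p < q < p(N+α)/(N-sp), and α - β + (q-p)(1-N)/p < 0. Then the embedding of the space of radial functions W^{s,p}_{rad,β}(ℝ^N) (with norm ‖u‖_{p,β} + [u]_{s,p}) into L^q_α(ℝ^N) is compact: if u_n ⇀ 0 weakly in W^{s,p}_{rad,β}(ℝ^N), then ∫_{ℝ^N} |x|^α |u_n|^q dx → 0. -/

import Mathlib

open MeasureTheory Filter

/-- The Gagliardo seminorm `[u]_{s,p}` for `s ∈ (0,1)`, and `‖∇u‖_{L^p}` for `s = 1`. -/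
noncomputable def seminormSP (N : ℕ) (s p : ℝ) (u : EuclideanSpace ℝ (Fin N) → ℝ) : ℝ :=
  if s = 1 then (∫ x, ‖fderiv ℝ u x‖ ^ p) ^ (1 / p)
  else (∫ q : EuclideanSpace ℝ (Fin N) × EuclideanSpace ℝ (Fin N),
      |u q.1 - u q.2| ^ p / ‖q.1 - q.2‖ ^ ((N : ℝ) + s * p)) ^ (1 / p)

/-- Membership in the weighted radial space `W^{s,p}_{rad,β}(ℝ^N)`. -/
def MemWspBeta (N : ℕ) (s p β : ℝ) (u : EuclideanSpace ℝ (Fin N) → ℝ) : Prop :=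
  Measurable u ∧ (∀ x y : EuclideanSpace ℝ (Fin N), ‖x‖ = ‖y‖ → u x = u y) ∧
    Integrable (fun x : EuclideanSpace ℝ (Fin N) => ‖x‖ ^ β * |u x| ^ p) ∧
    (if s = 1 then Differentiable ℝ u ∧ Integrable (fun x => ‖fderiv ℝ u x‖ ^ p)
     else Integrable (fun q : EuclideanSpace ℝ (Fin N) × EuclideanSpace ℝ (Fin N) =>
        |u q.1 - u q.2| ^ p / ‖q.1 - q.2‖ ^ ((N : ℝ) + s * p)))

/-! A radial function on an `N`-dimensional space is a profile on `(0, ∞)`, and polar coordinates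
bound the energy of the profile on every interval `(a, b]` with `b ≤ 4a` by the Sobolev energy of
the function, with weight `a ^ -(N - 1)`. Since `s > 1/p`, a Campanato iteration turns this into a
Hölder bound for the oscillation of the profile. Comparing a value with an average over an interval
of fixed length gives the decay `t ^ (-(N - 1) / p)` at infinity; dyadic iteration towards the
origin gives a bound `t ^ -γ` near `0`, with `γ` small enough for `q` to be subcritical.

The oscillation bound is uniform along the sequence, so weak convergence, tested against bumps
concentrating at a point, yields almost everywhere convergence of the profiles. On a bounded
interval dominated convergence applies; beyond a large radius, the decay together with the weighted
`L^p` bound makes the integrals uniformly small. -/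

open Set Topology
open scoped ENNReal NNReal

section MeasureTheoreticTools

variable {X : Type*} [MeasurableSpace X] {μ : Measure X}

lemma lintegral_le_lintegral_rpow_mul_measure_univ {p : ℝ} (hp : 1 < p) {g : X → ℝ≥0∞}
    (hg : AEMeasurable g μ) :
    ∫⁻ x, g x ∂μ ≤ (∫⁻ x, g x ^ p ∂μ) ^ (1 / p) * μ univ ^ (1 - 1 / p) := by
  have hpq := Real.HolderConjugate.conjExponent hp
  have h := ENNReal.lintegral_mul_le_Lp_mul_Lq μ hpq hg (aemeasurable_const (b := (1 : ℝ≥0∞)))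
  simpa [hpq.one_sub_inv] using h

lemma setLIntegral_Ioc_le_mul_lintegral_Ioi {a b c : ℝ} (ha : 0 < a) (hc : 0 ≤ c)
    (g : ℝ → ℝ≥0∞) :
    ∫⁻ t in Ioc a b, g t ≤
      ENNReal.ofReal (a ^ (-c)) * ∫⁻ t in Ioi 0, ENNReal.ofReal (t ^ c) * g t := by
  rw [← lintegral_const_mul' _ _ ENNReal.ofReal_ne_top]
  calc ∫⁻ t in Ioc a b, g t
      ≤ ∫⁻ t in Ioc a b, ENNReal.ofReal (a ^ (-c)) * (ENNReal.ofReal (t ^ c) * g t) := by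
        refine setLIntegral_mono' measurableSet_Ioc fun t ht => ?_
        rw [← mul_assoc, ← ENNReal.ofReal_mul (by positivity)]
        refine le_mul_of_one_le_left' (ENNReal.one_le_ofReal.2 ?_)
        rw [Real.rpow_neg ha.le, inv_mul_eq_div, one_le_div (by positivity)]
        exact Real.rpow_le_rpow ha.le ht.1.le hc
    _ ≤ _ := lintegral_mono_set fun t ht => ha.trans ht.1

lemma integral_mul_sub_integral_mul_eq_integral_prod [SFinite μ] {f w v : X → ℝ}
    (hw : Integrable w μ) (hv : Integrable v μ) (hfw : Integrable (fun x => f x * w x) μ)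
    (hfv : Integrable (fun x => f x * v x) μ) (hw_one : ∫ x, w x ∂μ = 1)
    (hv_one : ∫ x, v x ∂μ = 1) :
    ∫ x, f x * w x ∂μ - ∫ x, f x * v x ∂μ
      = ∫ z, (f z.1 - f z.2) * (w z.1 * v z.2) ∂(μ.prod μ) := by
  calc ∫ x, f x * w x ∂μ - ∫ x, f x * v x ∂μ
      = ∫ z, (f z.1 * w z.1) * v z.2 ∂(μ.prod μ)
        - ∫ z, w z.1 * (f z.2 * v z.2) ∂(μ.prod μ) := by
        rw [integral_prod_mul (fun x => f x * w x) v, integral_prod_mul w fun x => f x * v x,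
          hw_one, hv_one, mul_one, one_mul]
    _ = _ := by
        rw [← integral_sub (hfw.mul_prod hv) (hw.mul_prod hfv)]
        exact integral_congr_ae (Eventually.of_forall fun z => by ring)

lemma integral_abs_sub_prod_le [IsFiniteMeasure μ] {f : X → ℝ} {B : ℝ} (hf : Integrable f μ)
    (hB : 0 ≤ B) (hosc : ∫⁻ x, ∫⁻ y, ‖f x - f y‖ₑ ∂μ ∂μ ≤ ENNReal.ofReal B) :
    ∫ z, |f z.1 - f z.2| ∂(μ.prod μ) ≤ B := by
  have hfz : Integrable (fun z : X × X => f z.1 - f z.2) (μ.prod μ) :=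
    (hf.comp_fst μ).sub (hf.comp_snd μ)
  rw [integral_eq_lintegral_of_nonneg_ae (Eventually.of_forall fun _ => abs_nonneg _)
    hfz.abs.aestronglyMeasurable]
  refine ENNReal.toReal_le_of_le_ofReal hB ?_
  simpa only [← Real.enorm_eq_ofReal_abs, lintegral_prod _ hfz.aemeasurable.enorm] using hosc

lemma abs_integral_mul_sub_integral_mul_le [IsFiniteMeasure μ] {f w v : X → ℝ} {K L B : ℝ}
    (hf : Integrable f μ) (hw : AEStronglyMeasurable w μ) (hv : AEStronglyMeasurable v μ)
    (hwK : ∀ᵐ x ∂μ, |w x| ≤ K) (hvL : ∀ᵐ x ∂μ, |v x| ≤ L)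
    (hw_one : ∫ x, w x ∂μ = 1) (hv_one : ∫ x, v x ∂μ = 1)
    (hB : 0 ≤ B) (hosc : ∫⁻ x, ∫⁻ y, ‖f x - f y‖ₑ ∂μ ∂μ ≤ ENNReal.ofReal B) :
    |∫ x, f x * w x ∂μ - ∫ x, f x * v x ∂μ| ≤ K * L * B := by
  have hfz : Integrable (fun z : X × X => f z.1 - f z.2) (μ.prod μ) :=
    (hf.comp_fst μ).sub (hf.comp_snd μ)
  have hweight : ∀ᵐ z ∂(μ.prod μ), ‖(f z.1 - f z.2) * (w z.1 * v z.2)‖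
      ≤ |f z.1 - f z.2| * (K * L) := by
    filter_upwards [Measure.quasiMeasurePreserving_fst.ae hwK,
      Measure.quasiMeasurePreserving_snd.ae hvL] with z hz₁ hz₂
    rw [Real.norm_eq_abs, abs_mul, abs_mul]
    gcongr
    exact (abs_nonneg _).trans hz₁
  have hμ : (ae μ).NeBot := by
    rw [ae_neBot]
    rintro rfl
    simp at hw_one
  obtain ⟨x, hxK, hxL⟩ := (hwK.and hvL).exists
  calc |∫ x, f x * w x ∂μ - ∫ x, f x * v x ∂μ|
      ≤ ∫ z, |f z.1 - f z.2| * (K * L) ∂(μ.prod μ) := by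
        rw [integral_mul_sub_integral_mul_eq_integral_prod (.of_bound hw K hwK)
          (.of_bound hv L hvL) (hf.mul_bdd hw hwK) (hf.mul_bdd hv hvL) hw_one hv_one]
        exact norm_integral_le_of_norm_le (hfz.abs.mul_const _) hweight
    _ = K * L * ∫ z, |f z.1 - f z.2| ∂(μ.prod μ) := by rw [integral_mul_const, mul_comm]
    _ ≤ K * L * B :=
        mul_le_mul_of_nonneg_left (integral_abs_sub_prod_le hf hB hosc)
          (mul_nonneg ((abs_nonneg _).trans hxK) ((abs_nonneg _).trans hxL))

end MeasureTheoreticTools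

lemma two_div_one_sub_half_rpow_nonneg {σ : ℝ} (hσ : 0 ≤ σ) :
    0 ≤ 2 / (1 - (1 / 2 : ℝ) ^ σ) :=
  div_nonneg zero_le_two (sub_nonneg.2 (Real.rpow_le_one (by norm_num) (by norm_num) hσ))

lemma le_mul_rpow_of_le_two_mul_add {g : ℝ → ℝ} {γ D C : ℝ} (hγ : 0 < γ) (hD : 0 ≤ D)
    (hC : 0 ≤ C) (hbase : ∀ r, 1 ≤ r → r ≤ 2 → g r ≤ D)
    (hstep : ∀ r, 0 < r → r ≤ 1 → g r ≤ g (2 * r) + C * r ^ (-γ)) {r : ℝ} (hr : 0 < r)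
    (hr2 : r ≤ 2) : g r ≤ (2 ^ γ * D + C / (1 - 2 ^ (-γ))) * r ^ (-γ) := by
  set M := 2 ^ γ * D + C / (1 - 2 ^ (-γ))
  have hθ : 0 < 1 - (2 : ℝ) ^ (-γ) :=
    sub_pos.2 (Real.rpow_lt_one_of_one_lt_of_neg one_lt_two (neg_neg_of_pos hγ))
  have hDM : D ≤ M * 2 ^ (-γ) := by
    rw [Real.rpow_neg zero_le_two, ← div_eq_mul_inv, le_div_iff₀' (by positivity)]
    exact le_add_of_nonneg_right (by positivity)
  have hCM : C ≤ M * (1 - 2 ^ (-γ)) := by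
    rw [← div_le_iff₀ hθ]
    exact le_add_of_nonneg_left (by positivity)
  have hdyadic : ∀ k : ℕ, ∀ r : ℝ, (1 / 2) ^ k ≤ r → r ≤ 2 → g r ≤ M * r ^ (-γ) := by
    intro k
    induction k with
    | zero =>
      intro r hr hr2
      rw [pow_zero] at hr
      have hr0 : 0 < r := one_pos.trans_le hr
      have hM : 0 ≤ M := by positivity
      exact (hbase r hr hr2).trans (hDM.trans (mul_le_mul_of_nonneg_left
        (Real.rpow_le_rpow_of_nonpos hr0 hr2 (neg_nonpos.2 hγ.le)) hM))
    | succ k ih =>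
      intro r hr hr2
      have hr0 : 0 < r := lt_of_lt_of_le (by positivity) hr
      rcases le_or_gt 1 r with hr1 | hr1
      · exact ih r ((pow_le_one₀ (by norm_num) (by norm_num)).trans hr1) hr2
      calc g r ≤ g (2 * r) + C * r ^ (-γ) := hstep r hr0 hr1.le
        _ ≤ M * (2 * r) ^ (-γ) + M * (1 - 2 ^ (-γ)) * r ^ (-γ) := by
            gcongr
            exact ih (2 * r) (by rw [pow_succ] at hr; linarith) (by linarith)
        _ = M * r ^ (-γ) := by rw [Real.mul_rpow zero_le_two hr0.le]; ring
  obtain ⟨k, hk⟩ := exists_pow_lt_of_lt_one hr (by norm_num : (1 / 2 : ℝ) < 1)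
  exact hdyadic k r hk.le hr2

section Profile

/-- The bounds which membership of `x ↦ f ‖x‖` in the weighted fractional Sobolev space
`W^{s,p}_β` of a `(d+1)`-dimensional space gives for the radial profile `f` on `(0, ∞)`.
The energy is recorded only on intervals `(a, b]` with `b ≤ 4 * a`, where the Jacobian `t ^ d` is
comparable to `a ^ d`; the case `s = 1` is covered by the same inequality. -/
structure ProfileBound (d s p β : ℝ) (A : ℝ≥0) (f : ℝ → ℝ) : Prop where
  measurable : Measurable f
  lintegral_le : ∫⁻ t in Ioi 0, ENNReal.ofReal (t ^ (d + β)) * ‖f t‖ₑ ^ p ≤ A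
  energy_le : ∀ a b : ℝ, 0 < a → a < b → b ≤ 4 * a →
    ∫⁻ r in Ioc a b, ∫⁻ t in Ioc a b, ‖f r - f t‖ₑ ^ p
      ≤ A * ENNReal.ofReal (a ^ (-d) * (b - a) ^ (1 + s * p))

/-- The mean oscillation of a profile on `(a, a + δ]` allowed by `ProfileBound d s p β A`. -/
noncomputable def oscBound (d s p : ℝ) (A : ℝ≥0) (a δ : ℝ) : ℝ :=
  (A : ℝ) ^ (1 / p) * a ^ (-(d / p)) * δ ^ (s - 1 / p)

/-- A weight of total mass one on `(a, b]`, at most `K` times the uniform density. -/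
structure IsMeanWeight (a b K : ℝ) (w : ℝ → ℝ) : Prop where
  measurable : Measurable w
  abs_le : ∀ t ∈ Ioc a b, |w t| ≤ K / (b - a)
  integral_eq_one : ∫ t in Ioc a b, w t = 1

/-- The points `r` at which the averages of `f` over short intervals `(r, r + δ]` recover `f r`. -/
def IsRightLebesguePoint (f : ℝ → ℝ) (r : ℝ) : Prop :=
  Tendsto (fun δ => ⨍ t in Ioc r (r + δ), f t) (𝓝[>] 0) (𝓝 (f r))

variable {d s p β : ℝ} {A : ℝ≥0} {f w v : ℝ → ℝ} {a b a' b' r δ K L : ℝ}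

lemma oscBound_nonneg (ha : 0 ≤ a) (hδ : 0 ≤ δ) : 0 ≤ oscBound d s p A a δ := by
  unfold oscBound; positivity

lemma oscBound_mul_self_le {c γ : ℝ} (hγ : d / p - (s - 1 / p) ≤ γ) (hr : 0 < r)
    (hr1 : r ≤ 1) (hc : 0 ≤ c) :
    oscBound d s p A r (c * r) ≤ (A : ℝ) ^ (1 / p) * c ^ (s - 1 / p) * r ^ (-γ) := by
  calc oscBound d s p A r (c * r)
      = (A : ℝ) ^ (1 / p) * c ^ (s - 1 / p) * r ^ (-(d / p) + (s - 1 / p)) := by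
        rw [oscBound, Real.mul_rpow hc hr.le, Real.rpow_add hr]
        ring
    _ ≤ _ := mul_le_mul_of_nonneg_left
        (Real.rpow_le_rpow_of_exponent_ge hr hr1 (by linarith)) (by positivity)

lemma isMeanWeight_indicator (h₁ : a ≤ a') (h₂ : a' < b') (h₃ : b' ≤ b) :
    IsMeanWeight a b ((b - a) / (b' - a')) ((Ioc a' b').indicator fun _ => (b' - a')⁻¹) where
  measurable := measurable_const.indicator measurableSet_Ioc
  abs_le t _ := by
    have hlen : 0 < b' - a' := sub_pos.2 h₂
    have hlen' : 0 < b - a := by linarith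
    refine (norm_indicator_le_norm_self (fun _ => (b' - a')⁻¹) t).trans_eq ?_
    rw [Real.norm_of_nonneg (inv_nonneg.2 hlen.le)]
    field_simp
  integral_eq_one := by
    rw [setIntegral_indicator measurableSet_Ioc,
      inter_eq_self_of_subset_right (Ioc_subset_Ioc h₁ h₃), setIntegral_const,
      Real.volume_real_Ioc_of_le h₂.le, smul_eq_mul, mul_inv_cancel₀ (sub_pos.2 h₂).ne']

lemma integral_mul_indicator_eq_average (f : ℝ → ℝ) (h₁ : a ≤ a') (h₂ : a' ≤ b') (h₃ : b' ≤ b) :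
    ∫ t in Ioc a b, f t * (Ioc a' b').indicator (fun _ => (b' - a')⁻¹) t
      = ⨍ t in Ioc a' b', f t := by
  simp_rw [← indicator_mul_right]
  rw [setIntegral_indicator measurableSet_Ioc,
    inter_eq_self_of_subset_right (Ioc_subset_Ioc h₁ h₃), integral_mul_const, setAverage_eq,
    Real.volume_real_Ioc_of_le h₂, smul_eq_mul, mul_comm]

lemma exists_continuous_isMeanWeight (hδ : 0 < δ) :
    ∃ w : ℝ → ℝ, Continuous w ∧ HasCompactSupport w ∧ tsupport w ⊆ Icc r (r + δ) ∧
      IsMeanWeight r (r + δ) 2 w := by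
  let φ : ContDiffBump (r + δ / 2) := ⟨δ / 4, δ / 2, by positivity, by linarith⟩
  have hsupp : tsupport (φ.normed volume) = Icc r (r + δ) := by
    rw [φ.tsupport_normed_eq, Real.closedBall_eq_Icc]
    congr 1 <;> ring
  refine ⟨φ.normed volume, φ.continuous_normed, φ.hasCompactSupport_normed, hsupp.le,
    φ.continuous_normed.measurable, fun t _ => ?_, ?_⟩
  · rw [abs_of_nonneg (φ.nonneg_normed t)]
    refine (φ.normed_le_div_measure_closedBall_rIn volume t).trans_eq ?_
    rw [Real.volume_real_closedBall (by positivity)]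
    simp only [φ, add_sub_cancel_left]
    field_simp
    norm_num
  · rw [← integral_Icc_eq_integral_Ioc, setIntegral_eq_integral_of_forall_compl_eq_zero,
      φ.integral_normed]
    exact fun t ht => image_eq_zero_of_notMem_tsupport (hsupp ▸ ht)

namespace ProfileBound

lemma lintegral_Ioc_rpow_le (H : ProfileBound d s p β A f) (hd : 0 ≤ d) (hβ : 0 ≤ β)
    (ha : 0 < a) :
    ∫⁻ t in Ioc a b, ‖f t‖ₑ ^ p ≤ ENNReal.ofReal (a ^ (-(d + β)) * A) := by
  rw [ENNReal.ofReal_mul (by positivity), ENNReal.ofReal_coe_nnreal]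
  exact (setLIntegral_Ioc_le_mul_lintegral_Ioi ha (add_nonneg hd hβ) _).trans
    (mul_le_mul_right H.lintegral_le _)

lemma lintegral_Ioc_le (H : ProfileBound d s p β A f) (hp : 1 < p) (hd : 0 ≤ d) (hβ : 0 ≤ β)
    (ha : 0 < a) (hab : a < b) :
    ∫⁻ t in Ioc a b, ‖f t‖ₑ ≤
      ENNReal.ofReal ((a ^ (-(d + β)) * A) ^ (1 / p) * (b - a) ^ (1 - 1 / p)) := by
  have hp' : 1 / p ≤ 1 := (div_le_one (by linarith)).2 hp.le
  have hba : 0 < b - a := sub_pos.2 hab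
  have hvol : volume.restrict (Ioc a b) univ = ENNReal.ofReal (b - a) := by simp
  refine (lintegral_le_lintegral_rpow_mul_measure_univ hp H.measurable.enorm.aemeasurable).trans ?_
  rw [hvol, ENNReal.ofReal_mul (by positivity),
    ← ENNReal.ofReal_rpow_of_nonneg (by positivity) (by positivity),
    ← ENNReal.ofReal_rpow_of_nonneg hba.le (by linarith)]
  gcongr
  exact H.lintegral_Ioc_rpow_le hd hβ ha

lemma integrableOn_Ioc (H : ProfileBound d s p β A f) (hp : 1 < p) (hd : 0 ≤ d) (hβ : 0 ≤ β)
    (ha : 0 < a) (hab : a < b) : IntegrableOn f (Ioc a b) :=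
  ⟨H.measurable.aestronglyMeasurable,
    (H.lintegral_Ioc_le hp hd hβ ha hab).trans_lt ENNReal.ofReal_lt_top⟩

lemma lintegral_lintegral_Ioc_le (H : ProfileBound d s p β A f) (hp : 1 < p)
    (ha : 0 < a) (hab : a < b) (hb : b ≤ 4 * a) :
    ∫⁻ r in Ioc a b, ∫⁻ t in Ioc a b, ‖f r - f t‖ₑ
      ≤ ENNReal.ofReal ((b - a) ^ 2 * oscBound d s p A a (b - a)) := by
  have hp' : 1 / p ≤ 1 := (div_le_one (by linarith)).2 hp.le
  have hba : 0 < b - a := sub_pos.2 hab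
  set μ := volume.restrict (Ioc a b)
  have hf := H.measurable
  have hmeas : Measurable fun z : ℝ × ℝ => ‖f z.1 - f z.2‖ₑ := by fun_prop
  have hmass : (μ.prod μ) univ = ENNReal.ofReal ((b - a) ^ 2) := by
    simp [μ, ← univ_prod_univ, Measure.prod_prod, sq, ENNReal.ofReal_mul hba.le]
  have hexp : (b - a) ^ 2 * oscBound d s p A a (b - a) =
      (A * (a ^ (-d) * (b - a) ^ (1 + s * p))) ^ (1 / p) * ((b - a) ^ 2) ^ (1 - 1 / p) := by
    have hp0 : p ≠ 0 := by linarith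
    have hpow : (b - a) ^ (2 : ℝ) * (b - a) ^ (s - 1 / p)
        = (b - a) ^ ((1 + s * p) * (1 / p)) * (b - a) ^ (2 * (1 - 1 / p)) := by
      rw [← Real.rpow_add hba, ← Real.rpow_add hba]
      congr 1; field_simp; ring
    rw [oscBound, Real.mul_rpow A.coe_nonneg (by positivity),
      Real.mul_rpow (by positivity) (by positivity), ← Real.rpow_mul ha.le, ← Real.rpow_mul hba.le,
      ← Real.rpow_two, ← Real.rpow_mul hba.le, show -d * (1 / p) = -(d / p) by ring]
    linear_combination (A : ℝ) ^ (1 / p) * a ^ (-(d / p)) * hpow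
  calc ∫⁻ r in Ioc a b, ∫⁻ t in Ioc a b, ‖f r - f t‖ₑ
      = ∫⁻ z, ‖f z.1 - f z.2‖ₑ ∂(μ.prod μ) := (lintegral_prod _ hmeas.aemeasurable).symm
    _ ≤ (∫⁻ z, ‖f z.1 - f z.2‖ₑ ^ p ∂(μ.prod μ)) ^ (1 / p) * (μ.prod μ) univ ^ (1 - 1 / p) :=
        lintegral_le_lintegral_rpow_mul_measure_univ hp hmeas.aemeasurable
    _ ≤ _ := by
        rw [hexp, hmass, ENNReal.ofReal_mul (by positivity),
          ← ENNReal.ofReal_rpow_of_nonneg (by positivity) (by positivity),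
          ← ENNReal.ofReal_rpow_of_nonneg (by positivity) (by linarith),
          lintegral_prod _ (hmeas.pow_const p).aemeasurable, ENNReal.ofReal_mul A.coe_nonneg,
          ENNReal.ofReal_coe_nnreal]
        gcongr
        exact H.energy_le a b ha hab hb

lemma abs_integral_mul_sub_le (H : ProfileBound d s p β A f) (hp : 1 < p) (hd : 0 ≤ d)
    (hβ : 0 ≤ β) (ha : 0 < a) (hab : a < b) (hb : b ≤ 4 * a)
    (hw : IsMeanWeight a b K w) (hv : IsMeanWeight a b L v) :
    |(∫ t in Ioc a b, f t * w t) - ∫ t in Ioc a b, f t * v t|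
      ≤ K * L * oscBound d s p A a (b - a) := by
  have hba : 0 < b - a := sub_pos.2 hab
  refine (abs_integral_mul_sub_integral_mul_le (H.integrableOn_Ioc hp hd hβ ha hab)
    hw.measurable.aestronglyMeasurable hv.measurable.aestronglyMeasurable
    (ae_restrict_of_forall_mem measurableSet_Ioc hw.abs_le)
    (ae_restrict_of_forall_mem measurableSet_Ioc hv.abs_le) hw.integral_eq_one hv.integral_eq_one
    (mul_nonneg (sq_nonneg _) (oscBound_nonneg ha.le hba.le))
    (H.lintegral_lintegral_Ioc_le hp ha hab hb)).trans_eq ?_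
  field_simp

lemma abs_average_sub_integral_mul_le (H : ProfileBound d s p β A f) (hp : 1 < p) (hd : 0 ≤ d)
    (hβ : 0 ≤ β) (ha : 0 < a) (hb : b ≤ 4 * a) (h₁ : a ≤ a') (h₂ : a' < b') (h₃ : b' ≤ b)
    (hw : IsMeanWeight a b K w) :
    |(⨍ t in Ioc a' b', f t) - ∫ t in Ioc a b, f t * w t|
      ≤ (b - a) / (b' - a') * K * oscBound d s p A a (b - a) := by
  rw [← integral_mul_indicator_eq_average f h₁ h₂.le h₃]
  exact H.abs_integral_mul_sub_le hp hd hβ ha (by linarith) hb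
    (isMeanWeight_indicator h₁ h₂ h₃) hw

lemma ae_isRightLebesguePoint (H : ProfileBound d s p β A f) (hp : 1 < p) (hd : 0 ≤ d)
    (hβ : 0 ≤ β) : ∀ᵐ r : ℝ, 0 < r → IsRightLebesguePoint f r := by
  have hderiv : ∀ n : ℕ, ∀ᵐ r : ℝ, r ∈ uIcc (1 / ((n : ℝ) + 1)) (n + 2) →
      ∀ c ∈ uIcc (1 / ((n : ℝ) + 1)) (n + 2),
        HasDerivAt (fun y => ∫ t in c..y, f t) (f r) r := fun n => by
    have hn : 1 / ((n : ℝ) + 1) < n + 2 := by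
      rw [div_lt_iff₀ (by positivity)]
      nlinarith [n.cast_nonneg (α := ℝ)]
    exact ((intervalIntegrable_iff_integrableOn_Ioc_of_le hn.le).2
      (H.integrableOn_Ioc hp hd hβ (by positivity) hn)).ae_hasDerivAt_integral
  rw [← ae_all_iff] at hderiv
  filter_upwards [hderiv] with r hr hr0
  obtain ⟨n, hn⟩ := exists_nat_gt (max r (1 / r))
  have hrn : r ∈ uIcc (1 / ((n : ℝ) + 1)) (n + 2) := by
    refine Icc_subset_uIcc ⟨?_, by linarith [(le_max_left _ _).trans_lt hn]⟩
    rw [one_div_le (by positivity) hr0]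
    linarith [(le_max_right r (1 / r)).trans_lt hn]
  have hslope := (hasDerivAt_iff_tendsto_slope_zero.1 (hr n hrn r hrn)).mono_left
    (nhdsWithin_mono 0 fun x (hx : 0 < x) => hx.ne')
  refine hslope.congr' ?_
  filter_upwards [self_mem_nhdsWithin] with δ (hδ : 0 < δ)
  rw [intervalIntegral.integral_same, sub_zero, intervalIntegral.integral_of_le (by linarith),
    setAverage_eq, Real.volume_real_Ioc_of_le (by linarith), add_sub_cancel_left]

lemma abs_sub_average_le (H : ProfileBound d s p β A f) (hp : 1 < p) (hd : 0 ≤ d) (hβ : 0 ≤ β)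
    (hs : 1 / p < s) (hr : 0 < r) (hδ : 0 < δ) (hδr : δ ≤ r) (hL : IsRightLebesguePoint f r) :
    |f r - ⨍ t in Ioc r (r + δ), f t|
      ≤ 2 / (1 - (1 / 2) ^ (s - 1 / p)) * oscBound d s p A r δ := by
  have hθ : ((1 : ℝ) / 2) ^ (s - 1 / p) < 1 :=
    Real.rpow_lt_one (by norm_num) (by norm_num) (sub_pos.2 hs)
  have hpos (k : ℕ) : 0 < δ * (1 / 2 : ℝ) ^ k := by positivity
  have hle (k : ℕ) : δ * (1 / 2 : ℝ) ^ k ≤ δ :=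
    mul_le_of_le_one_right hδ.le (pow_le_one₀ (by norm_num) (by norm_num))
  have hlim : Tendsto (fun k : ℕ => ⨍ t in Ioc r (r + δ * (1 / 2) ^ k), f t) atTop (𝓝 (f r)) := by
    refine hL.comp (tendsto_nhdsWithin_iff.2 ⟨?_, Eventually.of_forall hpos⟩)
    simpa using (tendsto_pow_atTop_nhds_zero_of_lt_one (r := (1 / 2 : ℝ))
      (by norm_num) (by norm_num)).const_mul δ
  have hstep (k : ℕ) : dist (⨍ t in Ioc r (r + δ * (1 / 2) ^ k), f t)
      (⨍ t in Ioc r (r + δ * (1 / 2) ^ (k + 1)), f t)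
        ≤ 2 * oscBound d s p A r δ * ((1 / 2) ^ (s - 1 / p)) ^ k := by
    have hhalf : δ * (1 / 2 : ℝ) ^ (k + 1) = δ * (1 / 2) ^ k / 2 := by ring
    have hwhole := isMeanWeight_indicator le_rfl (lt_add_of_pos_right r (hpos k)) le_rfl
    have h := H.abs_average_sub_integral_mul_le hp hd hβ hr (by linarith [hle k]) le_rfl
      (lt_add_of_pos_right r (hpos (k + 1))) (by linarith [hpos k]) hwhole
    rw [integral_mul_indicator_eq_average f le_rfl (by linarith [hpos k]) le_rfl] at h
    rw [dist_comm]
    refine h.trans_eq ?_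
    have hscale : oscBound d s p A r (δ * (1 / 2) ^ k)
        = oscBound d s p A r δ * ((1 / 2) ^ (s - 1 / p)) ^ k := by
      rw [oscBound, oscBound, Real.mul_rpow hδ.le (by positivity), Real.rpow_pow_comm (by norm_num)]
      ring
    simp only [add_sub_cancel_left, hscale, hhalf]
    field_simp
  have h := dist_le_of_le_geometric_of_tendsto₀ _ _ hθ hstep hlim
  rw [dist_comm, Real.dist_eq] at h
  simpa only [pow_zero, mul_one, div_mul_eq_mul_div] using h

lemma abs_sub_integral_mul_le (H : ProfileBound d s p β A f) (hp : 1 < p) (hd : 0 ≤ d)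
    (hβ : 0 ≤ β) (hs : 1 / p < s) (hr : 0 < r) (hδ : 0 < δ) (hδr : δ ≤ r)
    (hL : IsRightLebesguePoint f r) (hw : IsMeanWeight r (r + δ) K w) :
    |f r - ∫ t in Ioc r (r + δ), f t * w t|
      ≤ (2 / (1 - (1 / 2) ^ (s - 1 / p)) + K) * oscBound d s p A r δ := by
  have havg := H.abs_average_sub_integral_mul_le hp hd hβ hr (by linarith) le_rfl
    (lt_add_of_pos_right r hδ) le_rfl hw
  rw [add_sub_cancel_left, div_self hδ.ne', one_mul] at havg
  refine (abs_sub_le _ (⨍ t in Ioc r (r + δ), f t) _).trans ?_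
  rw [add_mul]
  exact add_le_add (H.abs_sub_average_le hp hd hβ hs hr hδ hδr hL) havg

lemma abs_average_le (H : ProfileBound d s p β A f) (hp : 1 < p) (hd : 0 ≤ d) (hβ : 0 ≤ β)
    (ha : 1 ≤ a) (hab : a + 1 ≤ b) :
    |⨍ t in Ioc a b, f t| ≤ (A : ℝ) ^ (1 / p) * a ^ (-(d / p)) := by
  have ha0 : 0 < a := by linarith
  have hba : 0 < b - a := by linarith
  have hp0 : 0 < 1 / p := by positivity
  have hL1 : |∫ t in Ioc a b, f t| ≤
      (a ^ (-(d + β)) * A) ^ (1 / p) * (b - a) ^ (1 - 1 / p) := by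
    refine (norm_integral_le_lintegral_norm f).trans
      (ENNReal.toReal_le_of_le_ofReal (by positivity) ?_)
    simpa only [ofReal_norm] using H.lintegral_Ioc_le hp hd hβ ha0 (by linarith : a < b)
  rw [setAverage_eq, Real.volume_real_Ioc_of_le (by linarith), smul_eq_mul, abs_mul,
    abs_of_pos (inv_pos.2 hba)]
  calc (b - a)⁻¹ * |∫ t in Ioc a b, f t|
      ≤ (b - a)⁻¹ * ((a ^ (-(d + β)) * A) ^ (1 / p) * (b - a) ^ (1 - 1 / p)) := by gcongr
    _ = (a ^ (-(d + β)) * A) ^ (1 / p) * (b - a) ^ (-(1 / p)) := by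
        rw [sub_eq_add_neg 1, Real.rpow_add hba, Real.rpow_one]
        field_simp
    _ ≤ (a ^ (-(d + β)) * A) ^ (1 / p) :=
        mul_le_of_le_one_right (by positivity)
          (Real.rpow_le_one_of_one_le_of_nonpos (by linarith) (by linarith))
    _ ≤ (a ^ (-d) * A) ^ (1 / p) := by gcongr; linarith
    _ = (A : ℝ) ^ (1 / p) * a ^ (-(d / p)) := by
        rw [Real.mul_rpow (by positivity) A.coe_nonneg, ← Real.rpow_mul ha0.le, mul_comm]
        congr 2; ring

lemma exists_forall_abs_le_rpow_of_one_le (d β : ℝ) (A : ℝ≥0) (hp : 1 < p) (hd : 0 ≤ d)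
    (hβ : 0 ≤ β) (hs : 1 / p < s) :
    ∃ B, 0 ≤ B ∧ ∀ f, ProfileBound d s p β A f → ∀ r, 1 ≤ r → IsRightLebesguePoint f r →
      |f r| ≤ B * r ^ (-(d / p)) := by
  have hC := two_div_one_sub_half_rpow_nonneg (sub_pos.2 hs).le
  refine ⟨(2 / (1 - (1 / 2) ^ (s - 1 / p)) + 1) * (A : ℝ) ^ (1 / p), by positivity,
    fun f H r hr hL => ?_⟩
  have hosc := H.abs_sub_average_le hp hd hβ hs (by linarith) one_pos hr hL
  rw [oscBound, Real.one_rpow, mul_one] at hosc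
  have havg := H.abs_average_le hp hd hβ hr le_rfl
  linarith [abs_sub_abs_le_abs_sub (f r) (⨍ t in Ioc r (r + 1), f t)]

lemma abs_average_two_mul_le_add {γ : ℝ} (H : ProfileBound d s p β A f) (hp : 1 < p)
    (hd : 0 ≤ d) (hβ : 0 ≤ β) (hγ : d / p - (s - 1 / p) ≤ γ) (hr : 0 < r) (hr1 : r ≤ 1) :
    |⨍ t in Ioc r (2 * r), f t| ≤ |⨍ t in Ioc (2 * r) (2 * (2 * r)), f t|
      + 9 / 2 * (A : ℝ) ^ (1 / p) * 3 ^ (s - 1 / p) * r ^ (-γ) := by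
  have hright := isMeanWeight_indicator (a := r) (b := 2 * (2 * r)) (by linarith)
    (by linarith : 2 * r < 2 * (2 * r)) le_rfl
  have h := H.abs_average_sub_integral_mul_le hp hd hβ hr (by linarith) le_rfl
    (by linarith : r < 2 * r) (by linarith) hright
  rw [integral_mul_indicator_eq_average f (by linarith) (by linarith) le_rfl,
    show (2 * (2 * r) - r) / (2 * r - r) * ((2 * (2 * r) - r) / (2 * (2 * r) - 2 * r)) = 9 / 2 by
      field_simp; norm_num,
    show 2 * (2 * r) - r = 3 * r by ring] at h
  have hosc := oscBound_mul_self_le (A := A) hγ hr hr1 zero_le_three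
  linarith [abs_sub_abs_le_abs_sub (⨍ t in Ioc r (2 * r), f t)
    (⨍ t in Ioc (2 * r) (2 * (2 * r)), f t)]

lemma abs_average_two_mul_le {γ : ℝ} (H : ProfileBound d s p β A f) (hp : 1 < p) (hd : 0 ≤ d)
    (hβ : 0 ≤ β) (hγ0 : 0 < γ) (hγ : d / p - (s - 1 / p) ≤ γ) (hr : 0 < r) (hr2 : r ≤ 2) :
    |⨍ t in Ioc r (2 * r), f t| ≤ (2 ^ γ * (A : ℝ) ^ (1 / p)
      + 9 / 2 * (A : ℝ) ^ (1 / p) * 3 ^ (s - 1 / p) / (1 - 2 ^ (-γ))) * r ^ (-γ) := by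
  refine le_mul_rpow_of_le_two_mul_add (g := fun r => |⨍ t in Ioc r (2 * r), f t|) hγ0
    (by positivity) (by positivity) (fun r hr _ => ?_)
    (fun r hr hr1 => H.abs_average_two_mul_le_add hp hd hβ hγ hr hr1) hr hr2
  refine (H.abs_average_le hp hd hβ hr (by linarith)).trans
    (mul_le_of_le_one_right (by positivity) ?_)
  exact Real.rpow_le_one_of_one_le_of_nonpos hr (neg_nonpos.2 (by positivity))

lemma exists_forall_abs_le_rpow_of_le_one {γ : ℝ} (d β : ℝ) (A : ℝ≥0) (hp : 1 < p) (hd : 0 ≤ d)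
    (hβ : 0 ≤ β) (hs : 1 / p < s) (hγ0 : 0 < γ) (hγ : d / p - (s - 1 / p) ≤ γ) :
    ∃ S, 0 ≤ S ∧ ∀ f, ProfileBound d s p β A f → ∀ r, 0 < r → r ≤ 1 → IsRightLebesguePoint f r →
      |f r| ≤ S * r ^ (-γ) := by
  have hC := two_div_one_sub_half_rpow_nonneg (sub_pos.2 hs).le
  have hθ : 0 ≤ 1 - (2 : ℝ) ^ (-γ) :=
    sub_nonneg.2 (Real.rpow_le_one_of_one_le_of_nonpos one_le_two (neg_nonpos.2 hγ0.le))
  refine ⟨2 / (1 - (1 / 2) ^ (s - 1 / p)) * (A : ℝ) ^ (1 / p) + (2 ^ γ * (A : ℝ) ^ (1 / p)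
    + 9 / 2 * (A : ℝ) ^ (1 / p) * 3 ^ (s - 1 / p) / (1 - 2 ^ (-γ))), by positivity,
    fun f H r hr hr1 hL => ?_⟩
  have hosc : oscBound d s p A r r ≤ (A : ℝ) ^ (1 / p) * r ^ (-γ) := by
    simpa only [one_mul, Real.one_rpow, mul_one] using
      oscBound_mul_self_le (A := A) hγ hr hr1 zero_le_one
  have hpt := (H.abs_sub_average_le hp hd hβ hs hr hr le_rfl hL).trans
    (mul_le_mul_of_nonneg_left hosc hC)
  have havg := H.abs_average_two_mul_le hp hd hβ hγ0 hγ hr (hr1.trans one_le_two)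
  rw [← two_mul] at hpt
  rw [add_mul, mul_assoc]
  linarith [abs_sub_abs_le_abs_sub (f r) (⨍ t in Ioc r (2 * r), f t)]

lemma tendsto_zero_of_isRightLebesguePoint {f : ℕ → ℝ → ℝ}
    (H : ∀ n, ProfileBound d s p β A (f n)) (hp : 1 < p) (hd : 0 ≤ d) (hβ : 0 ≤ β)
    (hs : 1 / p < s) (hr : 0 < r) (hL : ∀ n, IsRightLebesguePoint (f n) r)
    (hweak : ∀ w : ℝ → ℝ, Continuous w → HasCompactSupport w → tsupport w ⊆ Ioi 0 →
      Tendsto (fun n => ∫ t, f n t * w t) atTop (𝓝 0)) :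
    Tendsto (fun n => f n r) atTop (𝓝 0) := by
  have hosc : Tendsto (fun δ => (2 / (1 - (1 / 2) ^ (s - 1 / p)) + 2) * oscBound d s p A r δ)
      (𝓝[>] 0) (𝓝 0) := by
    have hcont : Continuous fun δ : ℝ => oscBound d s p A r δ :=
      continuous_const.mul (Real.continuous_rpow_const (sub_pos.2 hs).le)
    have h := (hcont.tendsto 0).const_mul (2 / (1 - (1 / 2 : ℝ) ^ (s - 1 / p)) + 2)
    rw [oscBound, Real.zero_rpow (sub_pos.2 hs).ne', mul_zero, mul_zero] at h
    exact h.mono_left nhdsWithin_le_nhds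
  refine Metric.tendsto_nhds.2 fun ε hε => ?_
  obtain ⟨δ, hosc_lt, hδ, hδr⟩ := ((hosc.eventually_lt_const (half_pos hε)).and
    (Ioc_mem_nhdsGT hr)).exists
  obtain ⟨w, hw, hwc, hws, hmean⟩ := exists_continuous_isMeanWeight (r := r) hδ
  have hconv := hweak w hw hwc fun t ht => hr.trans_le (hws ht).1
  filter_upwards [Metric.tendsto_nhds.1 hconv _ (half_pos hε)] with n hn
  have hset : ∫ t in Ioc r (r + δ), f n t * w t = ∫ t, f n t * w t := by
    rw [← integral_Icc_eq_integral_Ioc, setIntegral_eq_integral_of_forall_compl_eq_zero]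
    intro t ht
    rw [image_eq_zero_of_notMem_tsupport fun h => ht (hws h), mul_zero]
  have hpt := (H n).abs_sub_integral_mul_le hp hd hβ hs hr hδ hδr (hL n) hmean
  rw [hset] at hpt
  rw [Real.dist_0_eq_abs] at hn ⊢
  linarith [abs_sub_abs_le_abs_sub (f n r) (∫ t, f n t * w t)]

end ProfileBound

lemma setLIntegral_Ioi_le_of_abs_le_rpow {B κ p q σ τ R : ℝ} {f : ℝ → ℝ} (hB : 0 ≤ B)
    (hp : 0 ≤ p) (hpq : p < q) (hR : 1 ≤ R) (hexp : σ - κ * (q - p) ≤ τ)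
    (hf : ∀ᵐ t : ℝ, R < t → |f t| ≤ B * t ^ (-κ)) :
    ∫⁻ t in Ioi R, ENNReal.ofReal (t ^ σ) * ‖f t‖ₑ ^ q ≤
      ENNReal.ofReal (B ^ (q - p) * R ^ (σ - κ * (q - p) - τ))
        * ∫⁻ t in Ioi 0, ENNReal.ofReal (t ^ τ) * ‖f t‖ₑ ^ p := by
  have hR0 : 0 < R := one_pos.trans_le hR
  rw [← lintegral_const_mul' _ _ ENNReal.ofReal_ne_top]
  refine (lintegral_mono_ae ?_).trans (lintegral_mono_set (Ioi_subset_Ioi hR0.le))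
  filter_upwards [ae_restrict_mem measurableSet_Ioi, ae_restrict_of_ae hf] with t (ht : R < t) hft
  have ht0 : 0 < t := hR0.trans ht
  have hsplit : ‖f t‖ₑ ^ q = ENNReal.ofReal (|f t| ^ (q - p)) * ‖f t‖ₑ ^ p := by
    rw [← ENNReal.ofReal_rpow_of_nonneg (abs_nonneg _) (sub_pos.2 hpq).le,
      ← Real.enorm_eq_ofReal_abs, ← ENNReal.rpow_add_of_nonneg _ _ (sub_pos.2 hpq).le hp,
      sub_add_cancel]
  have hweight : t ^ σ * |f t| ^ (q - p) ≤ B ^ (q - p) * R ^ (σ - κ * (q - p) - τ) * t ^ τ := by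
    calc t ^ σ * |f t| ^ (q - p) ≤ t ^ σ * (B * t ^ (-κ)) ^ (q - p) := by
          gcongr
          exact hft ht
      _ = B ^ (q - p) * t ^ (σ - κ * (q - p) - τ) * t ^ τ := by
          rw [Real.mul_rpow hB (by positivity), ← Real.rpow_mul ht0.le, mul_assoc,
            ← Real.rpow_add ht0, mul_left_comm, ← Real.rpow_add ht0]
          ring_nf
      _ ≤ _ := by
          have := Real.rpow_le_rpow_of_nonpos hR0 ht.le (sub_nonpos.2 hexp)
          gcongr
  rw [hsplit, ← mul_assoc, ← mul_assoc, ← ENNReal.ofReal_mul (by positivity),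
    ← ENNReal.ofReal_mul (by positivity)]
  gcongr

lemma tendsto_setLIntegral_Ioc_of_abs_le_rpow {C γ q σ R : ℝ} {f : ℕ → ℝ → ℝ} (hq : 0 < q)
    (hC : 0 ≤ C) (hexp : -1 < σ - γ * q) (hf : ∀ n, Measurable (f n))
    (hbound : ∀ n, ∀ᵐ t : ℝ, t ∈ Ioc 0 R → |f n t| ≤ C * t ^ (-γ))
    (hlim : ∀ᵐ t : ℝ, t ∈ Ioc 0 R → Tendsto (fun n => f n t) atTop (𝓝 0)) :
    Tendsto (fun n => ∫⁻ t in Ioc 0 R, ENNReal.ofReal (t ^ σ) * ‖f n t‖ₑ ^ q) atTop (𝓝 0) := by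
  have hmajorant : IntegrableOn (fun t : ℝ => C ^ q * t ^ (σ - γ * q)) (Ioc 0 R) :=
    (intervalIntegral.intervalIntegrable_rpow' hexp).1.const_mul _
  rw [← lintegral_zero (μ := volume.restrict (Ioc 0 R))]
  refine tendsto_lintegral_of_dominated_convergence
    (fun t => ENNReal.ofReal (C ^ q * t ^ (σ - γ * q)))
    (fun n => by have := hf n; fun_prop) (fun n => ?_) hmajorant.lintegral_lt_top.ne ?_
  · filter_upwards [ae_restrict_mem measurableSet_Ioc, ae_restrict_of_ae (hbound n)] with t ht hft
    have ht0 : 0 < t := ht.1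
    rw [Real.enorm_eq_ofReal_abs, ENNReal.ofReal_rpow_of_nonneg (abs_nonneg _) hq.le,
      ← ENNReal.ofReal_mul (by positivity)]
    refine ENNReal.ofReal_le_ofReal ?_
    calc t ^ σ * |f n t| ^ q ≤ t ^ σ * (C * t ^ (-γ)) ^ q := by gcongr; exact hft ht
      _ = C ^ q * t ^ (σ - γ * q) := by
          rw [Real.mul_rpow hC (by positivity), ← Real.rpow_mul ht0.le, mul_left_comm,
            ← Real.rpow_add ht0]
          ring_nf
  · filter_upwards [ae_restrict_mem measurableSet_Ioc, ae_restrict_of_ae hlim] with t ht hft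
    have h := ENNReal.Tendsto.const_mul (((hft ht).enorm).ennrpow_const q)
      (Or.inr (ENNReal.ofReal_ne_top (r := t ^ σ)))
    simpa only [enorm_zero, ENNReal.zero_rpow_of_pos hq, mul_zero] using h

lemma abs_le_mul_rpow_of_abs_le_rpow {S B γ κ R : ℝ} {f : ℝ → ℝ} {t : ℝ} (hS : 0 ≤ S)
    (hB : 0 ≤ B) (hγ : 0 ≤ γ) (hκ : 0 ≤ κ) (hzero : t ≤ 1 → |f t| ≤ S * t ^ (-γ))
    (hinfty : 1 ≤ t → |f t| ≤ B * t ^ (-κ)) (ht : t ∈ Ioc 0 R) :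
    |f t| ≤ (S + B * R ^ γ) * t ^ (-γ) := by
  have ht0 : 0 < t := ht.1
  have hR : 0 < R := ht0.trans_le ht.2
  rcases le_total t 1 with ht1 | ht1
  · refine (hzero ht1).trans ?_
    gcongr
    exact le_add_of_nonneg_right (by positivity)
  · calc |f t| ≤ B * t ^ (-κ) := hinfty ht1
      _ ≤ B * 1 := by
          gcongr
          exact Real.rpow_le_one_of_one_le_of_nonpos ht1 (neg_nonpos.2 hκ)
      _ = B * t ^ γ * t ^ (-γ) := by
          rw [mul_assoc, ← Real.rpow_add ht0, add_neg_cancel, Real.rpow_zero]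
      _ ≤ B * R ^ γ * t ^ (-γ) := by gcongr; exact ht.2
      _ ≤ _ := by
          gcongr
          exact le_add_of_nonneg_left hS

lemma tendsto_setLIntegral_Ioi_of_abs_le_rpow {S B γ κ p q σ τ : ℝ} {A : ℝ≥0} {f : ℕ → ℝ → ℝ}
    (hS : 0 ≤ S) (hB : 0 ≤ B) (hγ : 0 ≤ γ) (hκ : 0 ≤ κ) (hp : 0 ≤ p) (hpq : p < q)
    (hσγ : -1 < σ - γ * q) (hστ : σ - κ * (q - p) < τ) (hf : ∀ n, Measurable (f n))
    (hzero : ∀ n, ∀ᵐ t : ℝ, 0 < t → t ≤ 1 → |f n t| ≤ S * t ^ (-γ))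
    (hinfty : ∀ n, ∀ᵐ t : ℝ, 1 ≤ t → |f n t| ≤ B * t ^ (-κ))
    (hA : ∀ n, ∫⁻ t in Ioi 0, ENNReal.ofReal (t ^ τ) * ‖f n t‖ₑ ^ p ≤ A)
    (hlim : ∀ᵐ t : ℝ, 0 < t → Tendsto (fun n => f n t) atTop (𝓝 0)) :
    Tendsto (fun n => ∫⁻ t in Ioi 0, ENNReal.ofReal (t ^ σ) * ‖f n t‖ₑ ^ q) atTop (𝓝 0) := by
  have htail : Tendsto (fun R : ℝ => ENNReal.ofReal (B ^ (q - p) * R ^ (σ - κ * (q - p) - τ)) * A)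
      atTop (𝓝 0) := by
    have h := ((tendsto_rpow_neg_atTop (sub_pos.2 hστ)).const_mul (B ^ (q - p)))
    rw [neg_sub, mul_zero] at h
    simpa only [ENNReal.ofReal_zero, zero_mul] using
      ENNReal.Tendsto.mul_const (ENNReal.tendsto_ofReal h) (Or.inr ENNReal.coe_ne_top)
  refine ENNReal.tendsto_nhds_zero.2 fun ε hε => ?_
  have hε2 : 0 < ε / 2 := ENNReal.half_pos hε.ne'
  obtain ⟨R, hR, hR1⟩ := ((ENNReal.tendsto_nhds_zero.1 htail _ hε2).and
    (eventually_ge_atTop 1)).exists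
  have hlocal := tendsto_setLIntegral_Ioc_of_abs_le_rpow (C := S + B * R ^ γ) (R := R)
    (hp.trans_lt hpq) (by positivity) hσγ hf (fun n => ?_) ?_
  · filter_upwards [ENNReal.tendsto_nhds_zero.1 hlocal _ hε2] with n hn
    rw [← Ioc_union_Ioi_eq_Ioi (zero_le_one.trans hR1), ← ENNReal.add_halves ε]
    refine (lintegral_union_le _ _ _).trans (add_le_add hn ?_)
    refine (setLIntegral_Ioi_le_of_abs_le_rpow hB hp hpq hR1 hστ.le ?_).trans
      ((mul_le_mul_right (hA n) _).trans hR)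
    filter_upwards [hinfty n] with t ht hRt using ht (hR1.trans hRt.le)
  · filter_upwards [hzero n, hinfty n] with t ht₀ ht₁ ht
    exact abs_le_mul_rpow_of_abs_le_rpow hS hB hγ hκ (ht₀ ht.1) ht₁ ht
  · filter_upwards [hlim] with t ht htR using ht htR.1

theorem ProfileBound.tendsto_lintegral_zero {α q : ℝ} {f : ℕ → ℝ → ℝ}
    (H : ∀ n, ProfileBound d s p β A (f n)) (hp : 1 < p) (hd : 0 ≤ d) (hβ : 0 ≤ β)
    (hs : 1 / p < s) (hpq : p < q) (hα : 0 < d + 1 + α)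
    (hqα : (d + 1 - s * p) * q < p * (d + 1 + α)) (hexp : α - β - (q - p) * (d / p) < 0)
    (hweak : ∀ w : ℝ → ℝ, Continuous w → HasCompactSupport w → tsupport w ⊆ Ioi 0 →
      Tendsto (fun n => ∫ t, f n t * w t) atTop (𝓝 0)) :
    Tendsto (fun n => ∫⁻ t in Ioi 0, ENNReal.ofReal (t ^ (d + α)) * ‖f n t‖ₑ ^ q)
      atTop (𝓝 0) := by
  have hq : 0 < q := by linarith
  have hp0 : 0 < p := by linarith
  have hLebesgue : ∀ᵐ t : ℝ, 0 < t → ∀ n, IsRightLebesguePoint (f n) t := by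
    filter_upwards [ae_all_iff.2 fun n => (H n).ae_isRightLebesguePoint hp hd hβ] with t ht ht0 n
    exact ht n ht0
  obtain ⟨γ, hγ0, hγ, hγq⟩ : ∃ γ, 0 < γ ∧ d / p - (s - 1 / p) ≤ γ ∧ -1 < d + α - γ * q := by
    refine ⟨max (d / p - (s - 1 / p)) ((d + 1 + α) / (2 * q)),
      lt_max_of_lt_right (by positivity), le_max_left _ _, ?_⟩
    have hfrac : (d / p - (s - 1 / p)) * q = (d + 1 - s * p) * q / p := by field_simp; ring
    have hhalf : (d + 1 + α) / (2 * q) * q = (d + 1 + α) / 2 := by field_simp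
    rw [neg_lt_sub_iff_lt_add', max_mul_of_nonneg _ _ hq.le, hfrac, hhalf]
    exact max_lt ((div_lt_iff₀' hp0).2 (by linarith)) (by linarith)
  obtain ⟨S, hS, hzero⟩ :=
    exists_forall_abs_le_rpow_of_le_one d β A hp hd hβ hs hγ0 hγ
  obtain ⟨B, hB, hinfty⟩ := exists_forall_abs_le_rpow_of_one_le d β A hp hd hβ hs
  refine tendsto_setLIntegral_Ioi_of_abs_le_rpow hS hB hγ0.le (div_nonneg hd hp0.le) hp0.le hpq
    hγq (by linarith) (fun n => (H n).measurable) (fun n => ?_) (fun n => ?_)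
    (fun n => (H n).lintegral_le) ?_
  · filter_upwards [hLebesgue] with t ht ht0 ht1 using hzero _ (H n) t ht0 ht1 (ht ht0 n)
  · filter_upwards [hLebesgue] with t ht ht1 using hinfty _ (H n) t ht1 (ht (by linarith) n)
  · filter_upwards [hLebesgue] with t ht ht0
    exact tendsto_zero_of_isRightLebesguePoint H hp hd hβ hs ht0 (ht ht0) hweak

end Profile

section Polar

/-- The dimension `dim E - 1` of the unit sphere of `E`, as a real number: it is the exponent of
the Jacobian `t ^ (dim E - 1)` of polar coordinates. -/
noncomputable def sphereDim (E : Type*) [NormedAddCommGroup E] [NormedSpace ℝ E] : ℝ :=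
  Module.finrank ℝ E - 1

variable {E : Type*} [NormedAddCommGroup E] [NormedSpace ℝ E]

lemma mem_Ioo_and_mem_ball_of_smul_mem_ball {x σ : Metric.sphere (0 : E) 1} {r δ : ℝ} (hr : 0 < r)
    (h : r • (σ : E) ∈ Metric.ball (x : E) δ) :
    r ∈ Ioo (1 - δ) (1 + δ) ∧ σ ∈ Metric.ball x (2 * δ) := by
  rw [mem_ball_iff_norm] at h
  have hr1 : |r - 1| < δ := by
    simpa [norm_smul, abs_of_pos hr] using (abs_norm_sub_norm_le (r • (σ : E)) x).trans_lt h
  refine ⟨⟨by linarith [neg_lt_of_abs_lt hr1], by linarith [lt_of_abs_lt hr1]⟩, ?_⟩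
  have hσ : (σ : E) - x = (1 - r) • (σ : E) + (r • (σ : E) - x) := by
    rw [sub_smul, one_smul, sub_add_sub_cancel]
  rw [Metric.mem_ball, Subtype.dist_eq, dist_eq_norm, hσ]
  refine (norm_add_le _ _).trans_lt ?_
  rw [norm_smul, norm_eq_of_mem_sphere σ, mul_one, Real.norm_eq_abs, abs_sub_comm]
  linarith

lemma norm_smul_sub_smul_le {σ τ : Metric.sphere (0 : E) 1} {a b r t : ℝ} (ha : 0 < a)
    (hb : b ≤ 4 * a) (hr : r ∈ Ioc a b) (ht : t ∈ Ioc a b)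
    (hτ : τ ∈ Metric.ball σ ((b - a) / a)) :
    ‖r • (σ : E) - t • (τ : E)‖ ≤ 5 * (b - a) := by
  have ht0 : 0 < t := ha.trans ht.1
  rw [Metric.mem_ball, Subtype.dist_eq, dist_eq_norm, lt_div_iff₀ ha] at hτ
  have hdecomp : r • (σ : E) - t • (τ : E) = (r - t) • (σ : E) - t • ((τ : E) - σ) := by
    rw [sub_smul, smul_sub]; abel
  have hrt : |r - t| ≤ b - a := by
    rw [abs_le]; constructor <;> linarith [hr.1, hr.2, ht.1, ht.2]
  rw [hdecomp]
  refine (norm_sub_le _ _).trans ?_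
  rw [norm_smul, norm_smul, norm_eq_of_mem_sphere σ, mul_one, Real.norm_eq_abs,
    Real.norm_of_nonneg ht0.le]
  nlinarith [norm_nonneg ((τ : E) - σ), ht.2]

variable [FiniteDimensional ℝ E] [Nontrivial E]

lemma rpow_sphereDim (t : ℝ) : t ^ sphereDim E = t ^ (Module.finrank ℝ E - 1) := by
  rw [sphereDim, ← Nat.cast_pred Module.finrank_pos, Real.rpow_natCast]

lemma sphereDim_nonneg : 0 ≤ sphereDim E :=
  sub_nonneg.2 (Nat.one_le_cast.2 Module.finrank_pos)

lemma setLIntegral_Ioi_rpow_mul_indicator_ball_le (x σ : Metric.sphere (0 : E) 1) {ε : ℝ}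
    (hε3 : ε ≤ 3) :
    ∫⁻ r in Ioi (0 : ℝ), ENNReal.ofReal (r ^ sphereDim E)
        * (Metric.ball (x : E) (ε / 2)).indicator 1 (r • (σ : E))
      ≤ (Metric.ball x ε).indicator
          (fun _ => ENNReal.ofReal (ε * (5 / 2) ^ sphereDim E)) σ := by
  have hd := sphereDim_nonneg (E := E)
  have hle : ∀ r ∈ Ioi (0 : ℝ), ENNReal.ofReal (r ^ sphereDim E)
      * (Metric.ball (x : E) (ε / 2)).indicator 1 (r • (σ : E))
      ≤ (Ioo (1 - ε / 2) (1 + ε / 2)).indicator (fun _ => (Metric.ball x ε).indicator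
          (fun _ => ENNReal.ofReal ((5 / 2) ^ sphereDim E)) σ) r := by
    intro r (hr : 0 < r)
    by_cases hB : r • (σ : E) ∈ Metric.ball (x : E) (ε / 2)
    · obtain ⟨hIoo, hball⟩ := mem_Ioo_and_mem_ball_of_smul_mem_ball hr hB
      rw [mul_div_cancel₀ ε two_ne_zero] at hball
      rw [indicator_of_mem hB, indicator_of_mem hIoo, indicator_of_mem hball, Pi.one_apply,
        mul_one]
      gcongr
      linarith [hIoo.2]
    · simp [indicator_of_notMem hB]
  refine (setLIntegral_mono' measurableSet_Ioi hle).trans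
    ((setLIntegral_le_lintegral _ _).trans_eq ?_)
  rw [lintegral_indicator_const measurableSet_Ioo, Real.volume_Ioo, ← indicator_mul_const,
    ← ENNReal.ofReal_mul (by positivity)]
  ring_nf

variable [MeasurableSpace E] [BorelSpace E] (μ : Measure E) [μ.IsAddHaarMeasure]

lemma lintegral_eq_lintegral_toSphere_lintegral_Ioi {g : E → ℝ≥0∞} (hg : Measurable g) :
    ∫⁻ x, g x ∂μ = ∫⁻ σ, ∫⁻ r in Ioi (0 : ℝ),
      ENNReal.ofReal (r ^ sphereDim E) * g (r • (σ : E)) ∂volume ∂μ.toSphere := by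
  have hpolar : Measurable fun z : Metric.sphere (0 : E) 1 × Ioi (0 : ℝ) =>
      g ((z.2 : ℝ) • (z.1 : E)) := by fun_prop
  calc ∫⁻ x, g x ∂μ = ∫⁻ x : ({(0 : E)}ᶜ : Set E), g x ∂(μ.comap (↑)) := by
        rw [lintegral_subtype_comap (measurableSet_singleton _).compl, restrict_compl_singleton]
    _ = ∫⁻ z, g ((z.2 : ℝ) • (z.1 : E))
          ∂(μ.toSphere.prod (.volumeIoiPow (Module.finrank ℝ E - 1))) := by
        rw [← μ.measurePreserving_homeomorphUnitSphereProd.lintegral_comp hpolar]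
        refine lintegral_congr fun x => ?_
        have hx : ‖(x : E)‖ ≠ 0 := norm_ne_zero_iff.2 x.2
        simp [hx]
    _ = _ := by
        rw [lintegral_prod _ hpolar.aemeasurable]
        refine lintegral_congr fun σ => ?_
        simp_rw [rpow_sphereDim]
        rw [Measure.volumeIoiPow,
          lintegral_withDensity_eq_lintegral_mul _ (by fun_prop) (by fun_prop)]
        exact lintegral_subtype_comap measurableSet_Ioi
          (fun r : ℝ => ENNReal.ofReal (r ^ (Module.finrank ℝ E - 1)) * g (r • (σ : E)))

lemma lintegral_fun_norm {g : ℝ → ℝ≥0∞} (hg : Measurable g) :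
    ∫⁻ x, g ‖x‖ ∂μ =
      μ.toSphere univ * ∫⁻ r in Ioi 0, ENNReal.ofReal (r ^ sphereDim E) * g r := by
  rw [lintegral_eq_lintegral_toSphere_lintegral_Ioi μ (by fun_prop : Measurable fun x => g ‖x‖),
    mul_comm, ← lintegral_const]
  refine lintegral_congr fun σ => setLIntegral_congr_fun measurableSet_Ioi fun r hr => ?_
  simp [norm_smul, abs_of_pos (mem_Ioi.1 hr)]

lemma lintegral_norm_rpow_mul {g : ℝ → ℝ≥0∞} (hg : Measurable g) (c : ℝ) :
    ∫⁻ x, ENNReal.ofReal (‖x‖ ^ c) * g ‖x‖ ∂μ =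
      μ.toSphere univ * ∫⁻ r in Ioi 0, ENNReal.ofReal (r ^ (sphereDim E + c)) * g r := by
  rw [lintegral_fun_norm μ (by fun_prop : Measurable fun t : ℝ => ENNReal.ofReal (t ^ c) * g t)]
  congr 1
  refine setLIntegral_congr_fun measurableSet_Ioi fun r (hr : 0 < r) => ?_
  rw [← mul_assoc, ← ENNReal.ofReal_mul (by positivity), ← Real.rpow_add hr]

lemma toSphere_univ_ne_zero : μ.toSphere univ ≠ 0 :=
  Measure.measure_univ_ne_zero.2 (Measure.toSphere_ne_zero μ)

lemma mul_toSphere_le_mul_lintegral {F : E → ℝ≥0∞} (hF : Measurable F)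
    {S : Set (Metric.sphere (0 : E) 1)} (hS : MeasurableSet S) {K : ℝ≥0∞} {a b : ℝ} (ha : 0 < a)
    (hK : ∀ σ ∈ S, K ≤ ∫⁻ r in Ioc a b, F (r • (σ : E))) :
    K * μ.toSphere S ≤ ENNReal.ofReal (a ^ (-sphereDim E)) * ∫⁻ x, F x ∂μ := by
  rw [lintegral_eq_lintegral_toSphere_lintegral_Ioi μ hF,
    ← lintegral_const_mul' _ _ ENNReal.ofReal_ne_top, ← setLIntegral_const]
  refine (setLIntegral_mono' hS fun σ hσ => ?_).trans (setLIntegral_le_lintegral _ _)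
  exact (hK σ hσ).trans (setLIntegral_Ioc_le_mul_lintegral_Ioi ha sphereDim_nonneg _)

/- Integrate the indicator of the ball of radius `ε / 2` about `x` in polar coordinates: every ray
meeting it starts in the cap, and meets it in a segment of length at most `ε`. -/
lemma ofReal_mul_measure_ball_le_toSphere_ball (x : Metric.sphere (0 : E) 1) {ε : ℝ}
    (hε : 0 < ε) (hε3 : ε ≤ 3) :
    ENNReal.ofReal ((ε / 5) ^ sphereDim E / 2) * μ (Metric.ball 0 1)
      ≤ μ.toSphere (Metric.ball x ε) := by
  set M := ε * (5 / 2 : ℝ) ^ sphereDim E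
  have hM : 0 < M := by positivity
  have hball : μ (Metric.ball (x : E) (ε / 2))
      ≤ ENNReal.ofReal M * μ.toSphere (Metric.ball x ε) := by
    rw [← lintegral_indicator_one measurableSet_ball,
      lintegral_eq_lintegral_toSphere_lintegral_Ioi μ
        (measurable_one.indicator measurableSet_ball),
      ← lintegral_indicator_const measurableSet_ball]
    exact lintegral_mono fun σ => setLIntegral_Ioi_rpow_mul_indicator_ball_le x σ hε3
  have hscale : (ε / 2) ^ Module.finrank ℝ E = M * ((ε / 5) ^ sphereDim E / 2) := by
    have hdim : (Module.finrank ℝ E : ℝ) = sphereDim E + 1 := (sub_add_cancel _ _).symm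
    rw [← Real.rpow_natCast, hdim, Real.rpow_add_one (by positivity),
      show ε / 2 = 5 / 2 * (ε / 5) by ring, Real.mul_rpow (by norm_num) (by positivity)]
    ring
  rw [μ.addHaar_ball_of_pos _ (half_pos hε), hscale, ENNReal.ofReal_mul hM.le, mul_assoc] at hball
  exact (ENNReal.mul_le_mul_iff_right (by simpa using hM) ENNReal.ofReal_ne_top).1 hball

/- `f r - f t` is compared with the Gagliardo kernel at `r • σ` and `t • τ` for `τ` in the cap of
radius `(b - a) / a` about `σ`; there the two points are at distance at most `5 * (b - a)`. -/
lemma lintegral_Ioc_rpow_mul_toSphere_ball_le {f : ℝ → ℝ} (hf : Measurable f) {m p a b r : ℝ}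
    (hm : 0 ≤ m) (ha : 0 < a) (hb : b ≤ 4 * a) (hr : r ∈ Ioc a b)
    (σ : Metric.sphere (0 : E) 1) :
    (∫⁻ t in Ioc a b, ‖f r - f t‖ₑ ^ p) * (ENNReal.ofReal (5 * (b - a)) ^ m)⁻¹
        * μ.toSphere (Metric.ball σ ((b - a) / a))
      ≤ ENNReal.ofReal (a ^ (-sphereDim E))
        * ∫⁻ y, ‖f ‖r • (σ : E)‖ - f ‖y‖‖ₑ ^ p / ‖r • (σ : E) - y‖ₑ ^ m ∂μ := by
  refine mul_toSphere_le_mul_lintegral μ (b := b) (by fun_prop) measurableSet_ball ha fun τ hτ => ?_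
  rw [← lintegral_mul_const _ (by fun_prop)]
  refine setLIntegral_mono' measurableSet_Ioc fun t ht => ?_
  have hr0 : 0 < r := ha.trans hr.1
  have ht0 : 0 < t := ha.trans ht.1
  rw [norm_smul, norm_smul, norm_eq_of_mem_sphere, norm_eq_of_mem_sphere, mul_one, mul_one,
    Real.norm_of_nonneg hr0.le, Real.norm_of_nonneg ht0.le, div_eq_mul_inv]
  gcongr
  rw [← ofReal_norm]
  exact ENNReal.ofReal_le_ofReal (norm_smul_sub_smul_le ha hb hr ht hτ)

lemma lintegral_lintegral_Ioc_rpow_mul_le {f : ℝ → ℝ} (hf : Measurable f) {m p a b : ℝ}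
    (hm : 0 ≤ m) (ha : 0 < a) (hab : a < b) (hb : b ≤ 4 * a) :
    (∫⁻ r in Ioc a b, ∫⁻ t in Ioc a b, ‖f r - f t‖ₑ ^ p)
        * ((ENNReal.ofReal (5 * (b - a)) ^ m)⁻¹
          * (ENNReal.ofReal (((b - a) / a / 5) ^ sphereDim E / 2) * μ (Metric.ball 0 1)))
        * μ.toSphere univ
      ≤ ENNReal.ofReal (a ^ (-sphereDim E)) * (ENNReal.ofReal (a ^ (-sphereDim E))
        * ∫⁻ z : E × E, ‖f ‖z.1‖ - f ‖z.2‖‖ₑ ^ p / ‖z.1 - z.2‖ₑ ^ m ∂(μ.prod μ)) := by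
  have hkernel : Measurable fun z : E × E => ‖f ‖z.1‖ - f ‖z.2‖‖ₑ ^ p / ‖z.1 - z.2‖ₑ ^ m := by
    fun_prop
  rw [lintegral_prod _ hkernel.aemeasurable, ← lintegral_const_mul _ hkernel.lintegral_prod_right']
  refine mul_toSphere_le_mul_lintegral μ (b := b)
    (hkernel.lintegral_prod_right'.const_mul _) MeasurableSet.univ ha fun σ _ => ?_
  rw [← lintegral_mul_const _ (by fun_prop)]
  refine setLIntegral_mono' measurableSet_Ioc fun r hr => ?_
  refine le_trans ?_ (lintegral_Ioc_rpow_mul_toSphere_ball_le μ hf hm ha hb hr σ)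
  rw [← mul_assoc]
  gcongr
  exact ofReal_mul_measure_ball_le_toSphere_ball μ σ
    (div_pos (sub_pos.2 hab) ha) ((div_le_iff₀ ha).2 (by linarith))

/-- The constant in the comparison of the energy of a radial profile with the Gagliardo integral
`∬ |u x - u y| ^ p / ‖x - y‖ ^ m`. -/
noncomputable def gagliardoConst (m : ℝ) : ℝ≥0 :=
  2 * 5 ^ m * 5 ^ sphereDim E / ((μ (Metric.ball 0 1)).toNNReal * (μ.toSphere univ).toNNReal)

lemma toSphere_real_univ_pos : 0 < μ.toSphere.real univ :=
  ENNReal.toReal_pos (toSphere_univ_ne_zero μ) (measure_ne_top _ _)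

lemma gagliardoConst_mul {m a δ : ℝ} (ha : 0 < a) (hδ : 0 < δ) :
    gagliardoConst μ m * (a ^ (-sphereDim E) * δ ^ (m - sphereDim E))
        * (((5 * δ) ^ m)⁻¹ * ((δ / a / 5) ^ sphereDim E / 2 * μ.real (Metric.ball 0 1))
          * μ.toSphere.real univ)
      = a ^ (-sphereDim E) * a ^ (-sphereDim E) := by
  have hball : 0 < μ.real (Metric.ball 0 1) :=
    ENNReal.toReal_pos (Metric.measure_ball_pos _ _ one_pos).ne' measure_ball_lt_top.ne
  have hsphere := toSphere_real_univ_pos μ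
  rw [gagliardoConst]
  push_cast
  rw [← measureReal_def, ← measureReal_def, Real.mul_rpow (by norm_num) hδ.le, Real.rpow_sub hδ,
    Real.div_rpow (by positivity) (by norm_num), Real.div_rpow hδ.le ha.le, Real.rpow_neg ha.le]
  field_simp

lemma lintegral_lintegral_Ioc_rpow_le_gagliardo {f : ℝ → ℝ} (hf : Measurable f) {m p a b : ℝ}
    (hm : 0 ≤ m) (ha : 0 < a) (hab : a < b) (hb : b ≤ 4 * a) :
    ∫⁻ r in Ioc a b, ∫⁻ t in Ioc a b, ‖f r - f t‖ₑ ^ p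
      ≤ ENNReal.ofReal (gagliardoConst μ m * (a ^ (-sphereDim E) * (b - a) ^ (m - sphereDim E)))
        * ∫⁻ z : E × E, ‖f ‖z.1‖ - f ‖z.2‖‖ₑ ^ p / ‖z.1 - z.2‖ₑ ^ m ∂(μ.prod μ) := by
  have hba : 0 < b - a := sub_pos.2 hab
  have hball : 0 < μ.real (Metric.ball 0 1) :=
    ENNReal.toReal_pos (Metric.measure_ball_pos _ _ one_pos).ne' measure_ball_lt_top.ne
  have hsphere := toSphere_real_univ_pos μ
  set x := ((5 * (b - a)) ^ m)⁻¹ * (((b - a) / a / 5) ^ sphereDim E / 2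
    * μ.real (Metric.ball 0 1)) * μ.toSphere.real univ with hx_def
  have hx : 0 < x := by positivity
  have hx_ofReal : ENNReal.ofReal x = (ENNReal.ofReal (5 * (b - a)) ^ m)⁻¹
      * (ENNReal.ofReal (((b - a) / a / 5) ^ sphereDim E / 2) * μ (Metric.ball 0 1))
      * μ.toSphere univ := by
    rw [ENNReal.ofReal_mul (by positivity), ENNReal.ofReal_mul (by positivity),
      ENNReal.ofReal_mul (by positivity), ENNReal.ofReal_inv_of_pos (by positivity),
      ENNReal.ofReal_rpow_of_nonneg (by positivity) hm, ofReal_measureReal measure_ball_lt_top.ne,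
      ofReal_measureReal]
  refine (ENNReal.mul_le_mul_iff_left (by simpa using hx) ENNReal.ofReal_ne_top
    (c := ENNReal.ofReal x)).1 ?_
  rw [mul_right_comm, ← ENNReal.ofReal_mul (by positivity), hx_def, gagliardoConst_mul μ ha hba,
    ← hx_def, hx_ofReal, ENNReal.ofReal_mul (p := a ^ (-sphereDim E)) (by positivity)]
  simpa only [mul_assoc] using lintegral_lintegral_Ioc_rpow_mul_le μ hf hm ha hab hb (p := p)

end Polar

section Gradient

lemma enorm_sub_le_setLIntegral_enorm_deriv {f : ℝ → ℝ} {a b : ℝ}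
    (hf : ∀ t ∈ Icc a b, DifferentiableAt ℝ f t) {r t : ℝ} (hr : r ∈ Icc a b)
    (ht : t ∈ Icc a b) : ‖f r - f t‖ₑ ≤ ∫⁻ x in Ioc a b, ‖deriv f x‖ₑ := by
  by_cases htop : ∫⁻ x in Ioc a b, ‖deriv f x‖ₑ = ⊤
  · exact htop ▸ le_top
  have hint : IntegrableOn (deriv f) (Ioc a b) :=
    ⟨(measurable_deriv f).aestronglyMeasurable, lt_top_iff_ne_top.2 htop⟩
  have hsub : uIoc t r ⊆ Ioc a b := Ioc_subset_Ioc (le_min ht.1 hr.1) (max_le ht.2 hr.2)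
  have hFTC : ∫ x in t..r, deriv f x = f r - f t :=
    intervalIntegral.integral_deriv_eq_sub
      (fun x hx => hf x ⟨(le_min ht.1 hr.1).trans hx.1, hx.2.trans (max_le ht.2 hr.2)⟩)
      (intervalIntegrable_iff.2 (hint.mono_set hsub))
  calc ‖f r - f t‖ₑ = ‖∫ x in uIoc t r, deriv f x‖ₑ := by
        rw [← hFTC, ← ofReal_norm, ← ofReal_norm, intervalIntegral.norm_intervalIntegral_eq]
    _ ≤ ∫⁻ x in uIoc t r, ‖deriv f x‖ₑ := enorm_integral_le_lintegral_enorm _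
    _ ≤ _ := lintegral_mono_set hsub

lemma lintegral_lintegral_Ioc_rpow_le_lintegral_deriv {d p : ℝ} (hp : 1 < p) (hd : 0 ≤ d)
    {f : ℝ → ℝ} (hf : ∀ t, 0 < t → DifferentiableAt ℝ f t) {a b : ℝ} (ha : 0 < a) (hab : a < b) :
    ∫⁻ r in Ioc a b, ∫⁻ t in Ioc a b, ‖f r - f t‖ₑ ^ p
      ≤ ENNReal.ofReal (a ^ (-d) * (b - a) ^ (1 + p))
        * ∫⁻ t in Ioi 0, ENNReal.ofReal (t ^ d) * ‖deriv f t‖ₑ ^ p := by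
  have hba : 0 < b - a := sub_pos.2 hab
  have hp0 : 0 < p := one_pos.trans hp
  set I := ∫⁻ x in Ioc a b, ‖deriv f x‖ₑ ^ p
  have hosc : ∀ r ∈ Ioc a b, ∀ t ∈ Ioc a b,
      ‖f r - f t‖ₑ ^ p ≤ I * ENNReal.ofReal ((b - a) ^ (p - 1)) := by
    intro r hr t ht
    have hHolder := lintegral_le_lintegral_rpow_mul_measure_univ hp
      (measurable_deriv f).enorm.aemeasurable (μ := volume.restrict (Ioc a b))
    rw [Measure.restrict_apply_univ, Real.volume_Ioc] at hHolder
    calc ‖f r - f t‖ₑ ^ p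
        ≤ (I ^ (1 / p) * ENNReal.ofReal (b - a) ^ (1 - 1 / p)) ^ p := by
          gcongr
          exact (enorm_sub_le_setLIntegral_enorm_deriv (fun x hx => hf x (ha.trans_le hx.1))
            (Ioc_subset_Icc_self hr) (Ioc_subset_Icc_self ht)).trans hHolder
      _ = I * ENNReal.ofReal ((b - a) ^ (p - 1)) := by
          rw [ENNReal.mul_rpow_of_nonneg _ _ hp0.le, ← ENNReal.rpow_mul, ← ENNReal.rpow_mul,
            one_div_mul_cancel hp0.ne', ENNReal.rpow_one, sub_mul, one_div_mul_cancel hp0.ne',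
            one_mul, ENNReal.ofReal_rpow_of_pos hba]
  calc ∫⁻ r in Ioc a b, ∫⁻ t in Ioc a b, ‖f r - f t‖ₑ ^ p
      ≤ ∫⁻ _ in Ioc a b, ∫⁻ _ in Ioc a b, I * ENNReal.ofReal ((b - a) ^ (p - 1)) :=
        setLIntegral_mono' measurableSet_Ioc fun r hr =>
          setLIntegral_mono' measurableSet_Ioc fun t ht => hosc r hr t ht
    _ = ENNReal.ofReal ((b - a) ^ (1 + p)) * I := by
        rw [setLIntegral_const, setLIntegral_const, Real.volume_Ioc, mul_assoc, mul_assoc,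
          ← ENNReal.ofReal_mul hba.le, ← ENNReal.ofReal_mul (by positivity), mul_comm, ← mul_assoc,
          ← Real.rpow_add_one hba.ne', ← Real.rpow_add_one hba.ne']
        ring_nf
    _ ≤ ENNReal.ofReal ((b - a) ^ (1 + p)) * (ENNReal.ofReal (a ^ (-d))
          * ∫⁻ t in Ioi 0, ENNReal.ofReal (t ^ d) * ‖deriv f t‖ₑ ^ p) := by
        gcongr
        exact setLIntegral_Ioc_le_mul_lintegral_Ioi ha hd _
    _ = _ := by
        rw [← mul_assoc, ← ENNReal.ofReal_mul (by positivity), mul_comm (a ^ (-d))]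

variable {E : Type*} [NormedAddCommGroup E] [NormedSpace ℝ E]

lemma hasDerivAt_of_differentiableAt_comp_norm {f : ℝ → ℝ} {x : E} (hx : x ≠ 0)
    (hf : DifferentiableAt ℝ (fun y : E => f ‖y‖) x) :
    HasDerivAt f (fderiv ℝ (fun y : E => f ‖y‖) x (‖x‖⁻¹ • x)) ‖x‖ := by
  have hx0 : 0 < ‖x‖ := norm_pos_iff.2 hx
  have hray : HasDerivAt (fun r : ℝ => r • (‖x‖⁻¹ • x)) (‖x‖⁻¹ • x) ‖x‖ := by
    simpa using (hasDerivAt_id ‖x‖).smul_const (‖x‖⁻¹ • x)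
  have hu : HasFDerivAt (fun y : E => f ‖y‖) (fderiv ℝ (fun y : E => f ‖y‖) x)
      (‖x‖ • (‖x‖⁻¹ • x)) := by
    rw [smul_inv_smul₀ hx0.ne']
    exact hf.hasFDerivAt
  refine (hu.comp_hasDerivAt ‖x‖ hray).congr_of_eventuallyEq ?_
  filter_upwards [lt_mem_nhds hx0] with r hr
  simp [norm_smul, abs_of_pos hr, hx0.ne']

lemma enorm_deriv_norm_le_enorm_fderiv {f : ℝ → ℝ} {x : E} (hx : x ≠ 0)
    (hf : DifferentiableAt ℝ (fun y : E => f ‖y‖) x) :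
    ‖deriv f ‖x‖‖ₑ ≤ ‖fderiv ℝ (fun y : E => f ‖y‖) x‖ₑ := by
  rw [(hasDerivAt_of_differentiableAt_comp_norm hx hf).deriv, enorm_le_iff_norm_le]
  refine (ContinuousLinearMap.le_opNorm _ _).trans_eq ?_
  rw [norm_smul, norm_inv, norm_norm, inv_mul_cancel₀ (norm_ne_zero_iff.2 hx), mul_one]

end Gradient

section Sobolev

variable {E : Type*} [NormedAddCommGroup E] [NormedSpace ℝ E] [MeasurableSpace E]

/-- The `p`-th power of the homogeneous Sobolev seminorm of order `s`: the Gagliardo energy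
for `s ≠ 1`, and the Dirichlet energy `∫ ‖∇u‖ ^ p` for `s = 1`. -/
noncomputable def sobolevEnergy (μ : Measure E) (s p : ℝ) (u : E → ℝ) : ℝ≥0∞ :=
  if s = 1 then ∫⁻ x, ‖fderiv ℝ u x‖ₑ ^ p ∂μ
  else ∫⁻ z : E × E, ‖u z.1 - u z.2‖ₑ ^ p / ‖z.1 - z.2‖ₑ ^ (Module.finrank ℝ E + s * p) ∂(μ.prod μ)

variable [FiniteDimensional ℝ E] [Nontrivial E] [BorelSpace E] (μ : Measure E) [μ.IsAddHaarMeasure]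

lemma lintegral_lintegral_Ioc_rpow_le_lintegral_fderiv {p : ℝ} (hp : 1 < p) {f : ℝ → ℝ}
    (hf : Differentiable ℝ fun x : E => f ‖x‖) {a b : ℝ} (ha : 0 < a) (hab : a < b) :
    ∫⁻ r in Ioc a b, ∫⁻ t in Ioc a b, ‖f r - f t‖ₑ ^ p
      ≤ ENNReal.ofReal (a ^ (-sphereDim E) * (b - a) ^ (1 + p))
        * ((μ.toSphere univ)⁻¹ * ∫⁻ x, ‖fderiv ℝ (fun y : E => f ‖y‖) x‖ₑ ^ p ∂μ) := by
  obtain ⟨e, he⟩ := exists_norm_eq E zero_le_one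
  have hf_diff : ∀ t, 0 < t → DifferentiableAt ℝ f t := by
    intro t ht
    have hnorm : ‖t • e‖ = t := by rw [norm_smul, he, mul_one, Real.norm_of_nonneg ht.le]
    have hderiv := hasDerivAt_of_differentiableAt_comp_norm
      (norm_ne_zero_iff.1 (hnorm.trans_ne ht.ne')) (hf (t • e))
    rw [hnorm] at hderiv
    exact hderiv.differentiableAt
  refine (lintegral_lintegral_Ioc_rpow_le_lintegral_deriv hp (sphereDim_nonneg (E := E))
    hf_diff ha hab).trans ?_
  gcongr
  rw [mul_comm, ← div_eq_mul_inv, ENNReal.le_div_iff_mul_le (.inl (toSphere_univ_ne_zero μ))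
    (.inl (measure_ne_top _ _)), mul_comm,
    ← lintegral_fun_norm μ (g := fun t => ‖deriv f t‖ₑ ^ p) (by fun_prop)]
  refine lintegral_mono_ae ?_
  filter_upwards [compl_mem_ae_iff.2 (measure_singleton (0 : E))] with x hx
  gcongr
  exact enorm_deriv_norm_le_enorm_fderiv hx (hf x)

lemma exists_lintegral_lintegral_Ioc_rpow_le_sobolevEnergy {s p : ℝ} (hp : 1 < p) (hs : 0 ≤ s) :
    ∃ C : ℝ≥0, ∀ f : ℝ → ℝ, Measurable f →
      (s = 1 → Differentiable ℝ fun x : E => f ‖x‖) → ∀ a b, 0 < a → a < b → b ≤ 4 * a →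
      ∫⁻ r in Ioc a b, ∫⁻ t in Ioc a b, ‖f r - f t‖ₑ ^ p
        ≤ ENNReal.ofReal (a ^ (-sphereDim E) * (b - a) ^ (1 + s * p))
          * (C * sobolevEnergy μ s p (fun x => f ‖x‖)) := by
  rcases eq_or_ne s 1 with rfl | hs1
  · refine ⟨(μ.toSphere univ)⁻¹.toNNReal, fun f _ hdiff a b ha hab _ => ?_⟩
    rw [sobolevEnergy, if_pos rfl, one_mul,
      ENNReal.coe_toNNReal (ENNReal.inv_ne_top.2 (toSphere_univ_ne_zero μ))]
    exact lintegral_lintegral_Ioc_rpow_le_lintegral_fderiv μ hp (hdiff rfl) ha hab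
  · refine ⟨gagliardoConst μ (Module.finrank ℝ E + s * p), fun f hf _ a b ha hab hb => ?_⟩
    have hexp : (Module.finrank ℝ E : ℝ) + s * p - sphereDim E = 1 + s * p := by
      rw [sphereDim]; ring
    refine (lintegral_lintegral_Ioc_rpow_le_gagliardo μ hf (m := Module.finrank ℝ E + s * p)
      (by positivity) ha hab hb).trans_eq ?_
    rw [sobolevEnergy, if_neg hs1, hexp, mul_comm (gagliardoConst μ _ : ℝ),
      ENNReal.ofReal_mul (by positivity), ENNReal.ofReal_coe_nnreal, mul_assoc]

lemma exists_profileBound_of_comp_norm {s p : ℝ} (β : ℝ) (hp : 1 < p) (hs : 0 ≤ s) (T : ℝ≥0) :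
    ∃ A : ℝ≥0, ∀ f : ℝ → ℝ, Measurable f → (s = 1 → Differentiable ℝ fun x : E => f ‖x‖) →
      ∫⁻ x, ENNReal.ofReal (‖x‖ ^ β) * ‖f ‖x‖‖ₑ ^ p ∂μ ≤ T →
      sobolevEnergy μ s p (fun x => f ‖x‖) ≤ T → ProfileBound (sphereDim E) s p β A f := by
  obtain ⟨C, hC⟩ := exists_lintegral_lintegral_Ioc_rpow_le_sobolevEnergy μ hp hs
  set κ := (μ.toSphere univ)⁻¹.toNNReal
  have hκ : (κ : ℝ≥0∞) = (μ.toSphere univ)⁻¹ :=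
    ENNReal.coe_toNNReal (ENNReal.inv_ne_top.2 (toSphere_univ_ne_zero μ))
  refine ⟨max (κ * T) (C * T), fun f hf hdiff hweighted henergy => ⟨hf, ?_, ?_⟩⟩
  · rw [lintegral_norm_rpow_mul μ (g := fun t => ‖f t‖ₑ ^ p) (by fun_prop), mul_comm,
      ← ENNReal.le_div_iff_mul_le (.inl (toSphere_univ_ne_zero μ)) (.inl (measure_ne_top _ _)),
      div_eq_mul_inv, ← hκ, mul_comm, ← ENNReal.coe_mul] at hweighted
    exact hweighted.trans (by exact_mod_cast le_max_left _ _)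
  · intro a b ha hab hb
    rw [mul_comm]
    refine (hC f hf hdiff a b ha hab hb).trans ?_
    gcongr
    calc (C : ℝ≥0∞) * sobolevEnergy μ s p (fun x => f ‖x‖) ≤ C * T := by gcongr
      _ ≤ _ := by exact_mod_cast le_max_right _ _

lemma tendsto_integral_mul_of_tendsto_integral_mul_comp_norm {f : ℕ → ℝ → ℝ}
    (hweak : ∀ w : ℝ → ℝ, Continuous w → HasCompactSupport w → tsupport w ⊆ Ioi 0 →
      Tendsto (fun n => ∫ x, f n ‖x‖ * w ‖x‖ ∂μ) atTop (𝓝 0))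
    {w : ℝ → ℝ} (hw : Continuous w) (hw_compact : HasCompactSupport w)
    (hw_pos : tsupport w ⊆ Ioi 0) :
    Tendsto (fun n => ∫ t, f n t * w t) atTop (𝓝 0) := by
  set c := Module.finrank ℝ E * μ.real (Metric.ball 0 1)
  have hc : c ≠ 0 := mul_ne_zero (Nat.cast_ne_zero.2 Module.finrank_pos.ne')
    (ENNReal.toReal_pos (Metric.measure_ball_pos _ _ one_pos).ne' measure_ball_lt_top.ne).ne'
  set v : ℝ → ℝ := fun t => w t * (t ^ (Module.finrank ℝ E - 1))⁻¹
  have hv_supp : tsupport v ⊆ tsupport w := tsupport_mul_subset_left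
  have hv : Continuous v := by
    refine continuous_of_tsupport fun t ht => hw.continuousAt.mul ?_
    exact (continuousAt_id.pow _).inv₀ (pow_ne_zero _ (hw_pos (hv_supp ht)).ne')
  have hpolar : ∀ n, ∫ x, f n ‖x‖ * v ‖x‖ ∂μ = c * ∫ t, f n t * w t := by
    intro n
    have hsupp : ∀ t, t ∉ Ioi (0 : ℝ) → f n t * w t = 0 := fun t ht => by
      rw [image_eq_zero_of_notMem_tsupport fun h => ht (hw_pos h), mul_zero]
    rw [integral_fun_norm_addHaar μ fun t => f n t * v t, nsmul_eq_mul, smul_eq_mul, ← mul_assoc,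
      ← setIntegral_eq_integral_of_forall_compl_eq_zero hsupp]
    congr 1
    refine setIntegral_congr_fun measurableSet_Ioi fun t (ht : 0 < t) => ?_
    simp only [v, smul_eq_mul]
    field_simp
  have h := (hweak v hv (hw_compact.mul_right) (hv_supp.trans hw_pos)).const_mul c⁻¹
  simpa only [hpolar, inv_mul_cancel_left₀ hc, mul_zero] using h

/-- Radial functions on `E`: those that depend only on the norm. -/
def IsRadial (u : E → ℝ) : Prop :=
  ∀ x y, ‖x‖ = ‖y‖ → u x = u y

theorem stmt11_general {p s α β q : ℝ} (hp : 1 < p) (hs : 1 / p < s) (hβ : 0 ≤ β) (hpq : p < q)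
    (hα : 0 < Module.finrank ℝ E + α)
    (hqα : (Module.finrank ℝ E - s * p) * q < p * (Module.finrank ℝ E + α))
    (hexp : α - β + (q - p) * ((1 - Module.finrank ℝ E) / p) < 0)
    {u : ℕ → E → ℝ} (hmeas : ∀ n, Measurable (u n)) (hradial : ∀ n, IsRadial (u n))
    (hdiff : s = 1 → ∀ n, Differentiable ℝ (u n)) {T : ℝ≥0}
    (hweighted : ∀ n, ∫⁻ x, ENNReal.ofReal (‖x‖ ^ β) * ‖u n x‖ₑ ^ p ∂μ ≤ T)
    (henergy : ∀ n, sobolevEnergy μ s p (u n) ≤ T)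
    (hweak : ∀ w : ℝ → ℝ, Continuous w → HasCompactSupport w → tsupport w ⊆ Ioi 0 →
      Tendsto (fun n => ∫ x, u n x * w ‖x‖ ∂μ) atTop (𝓝 0)) :
    Tendsto (fun n => ∫⁻ x, ENNReal.ofReal (‖x‖ ^ α) * ‖u n x‖ₑ ^ q ∂μ) atTop (𝓝 0) := by
  obtain ⟨e, he⟩ := exists_norm_eq E zero_le_one
  obtain ⟨f, hf, hfu⟩ : ∃ f : ℕ → ℝ → ℝ, (∀ n, Measurable (f n)) ∧ u = fun n x => f n ‖x‖ :=
    ⟨fun n r => u n (r • e), fun n => (hmeas n).comp (by fun_prop),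
      funext₂ fun n x => hradial n _ _ (by rw [norm_smul, he, mul_one, norm_norm])⟩
  subst hfu
  obtain ⟨A, hA⟩ := exists_profileBound_of_comp_norm μ β hp
    ((one_div_pos.2 (one_pos.trans hp)).trans hs).le T
  have hdim : (Module.finrank ℝ E : ℝ) = sphereDim E + 1 := (sub_add_cancel _ _).symm
  rw [hdim] at hα hqα hexp
  have hprofile := ProfileBound.tendsto_lintegral_zero
    (fun n => hA (f n) (hf n) (fun h => hdiff h n) (hweighted n) (henergy n)) hp sphereDim_nonneg
    hβ hs hpq hα hqα (by convert hexp using 1; ring)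
    fun w => tendsto_integral_mul_of_tendsto_integral_mul_comp_norm μ hweak
  simp_rw [fun n => lintegral_norm_rpow_mul μ (g := fun t => ‖f n t‖ₑ ^ q) (by fun_prop) α]
  simpa using ENNReal.Tendsto.const_mul hprofile (.inr (measure_ne_top μ.toSphere univ))

end Sobolev

section EuclideanSpace

lemma ofReal_mul_abs_rpow {c p : ℝ} (hc : 0 ≤ c) (hp : 0 ≤ p) (y : ℝ) :
    ENNReal.ofReal (c * |y| ^ p) = ENNReal.ofReal c * ‖y‖ₑ ^ p := by
  rw [ENNReal.ofReal_mul hc, Real.enorm_eq_ofReal_abs,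
    ENNReal.ofReal_rpow_of_nonneg (abs_nonneg y) hp]

lemma lintegral_ofReal_le_of_integral_rpow_le {X : Type*} [MeasurableSpace X] {μ : Measure X}
    {g : X → ℝ} {p M : ℝ} (hp : 0 < p) (hg : Integrable g μ) (hg0 : 0 ≤ g)
    (hM : (∫ x, g x ∂μ) ^ (1 / p) ≤ M) :
    ∫⁻ x, ENNReal.ofReal (g x) ∂μ ≤ (M ^ p).toNNReal := by
  have hint : 0 ≤ ∫ x, g x ∂μ := integral_nonneg hg0
  rw [← ofReal_integral_eq_lintegral_ofReal hg (Eventually.of_forall hg0)]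
  refine ENNReal.ofReal_le_ofReal ?_
  rw [one_div] at hM
  exact (Real.rpow_inv_le_iff_of_pos hint ((by positivity : (0 : ℝ) ≤ _).trans hM) hp).1 hM

lemma ofReal_abs_sub_rpow_div {E : Type*} [NormedAddCommGroup E] (u : E → ℝ) {p : ℝ}
    (hp : 0 < p) (m : ℝ) (x y : E) :
    ENNReal.ofReal (|u x - u y| ^ p / ‖x - y‖ ^ m) = ‖u x - u y‖ₑ ^ p / ‖x - y‖ₑ ^ m := by
  rcases eq_or_ne x y with rfl | hxy
  · simp [hp, Real.zero_rpow hp.ne']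
  · have hnorm : 0 < ‖x - y‖ := norm_sub_pos_iff.2 hxy
    rw [ENNReal.ofReal_div_of_pos (by positivity),
      ← ENNReal.ofReal_rpow_of_nonneg (abs_nonneg _) hp.le,
      ← ENNReal.ofReal_rpow_of_pos hnorm, ofReal_norm, ← Real.enorm_eq_ofReal_abs]

lemma hasCompactSupport_comp_norm {E : Type*} [NormedAddCommGroup E] [ProperSpace E] {w : ℝ → ℝ}
    (hw : HasCompactSupport w) : HasCompactSupport fun x : E => w ‖x‖ := by
  obtain ⟨R, hR⟩ := hw.isCompact.isBounded.exists_norm_le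
  refine HasCompactSupport.intro (isCompact_closedBall 0 R) fun x hx =>
    image_eq_zero_of_notMem_tsupport fun h => hx ?_
  simpa using hR _ h

variable {N : ℕ} {s p β M : ℝ} {u : EuclideanSpace ℝ (Fin N) → ℝ}

lemma seminormSP_nonneg (N : ℕ) (s p : ℝ) (u : EuclideanSpace ℝ (Fin N) → ℝ) :
    0 ≤ seminormSP N s p u := by
  rw [seminormSP]
  split_ifs <;> positivity

lemma MemWspBeta.differentiable (hu : MemWspBeta N 1 p β u) : Differentiable ℝ u := by
  obtain ⟨-, -, -, henergy⟩ := hu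
  rw [if_pos rfl] at henergy
  exact henergy.1

lemma MemWspBeta.lintegral_le (hu : MemWspBeta N s p β u) (hp : 0 < p)
    (hM : (∫ x, ‖x‖ ^ β * |u x| ^ p) ^ (1 / p) ≤ M) :
    ∫⁻ x, ENNReal.ofReal (‖x‖ ^ β) * ‖u x‖ₑ ^ p ≤ (M ^ p).toNNReal := by
  have h := lintegral_ofReal_le_of_integral_rpow_le hp hu.2.2.1 (fun x => by positivity) hM
  simpa only [ofReal_mul_abs_rpow (Real.rpow_nonneg (norm_nonneg _) β) hp.le] using h

lemma MemWspBeta.sobolevEnergy_le (hu : MemWspBeta N s p β u) (hp : 0 < p)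
    (hM : seminormSP N s p u ≤ M) : sobolevEnergy volume s p u ≤ (M ^ p).toNNReal := by
  obtain ⟨-, -, -, henergy⟩ := hu
  rcases eq_or_ne s 1 with rfl | hs1
  · rw [if_pos rfl] at henergy
    rw [seminormSP, if_pos rfl] at hM
    have h := lintegral_ofReal_le_of_integral_rpow_le hp henergy.2 (fun x => by positivity) hM
    simpa only [sobolevEnergy, if_pos, ← ENNReal.ofReal_rpow_of_nonneg (norm_nonneg _) hp.le,
      ofReal_norm] using h
  · rw [if_neg hs1] at henergy
    rw [seminormSP, if_neg hs1] at hM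
    have h := lintegral_ofReal_le_of_integral_rpow_le hp henergy (fun x => by positivity) hM
    simp_rw [ofReal_abs_sub_rpow_div u hp] at h
    rwa [sobolevEnergy, if_neg hs1, finrank_euclideanSpace_fin]

end EuclideanSpace

/-- Compactness of the embedding `W^{s,p}_{rad,β}(ℝ^N) ⊂ L^q_α(ℝ^N)`: a sequence that is
bounded in the weighted norm and converges weakly to `0` converges strongly in `L^q_α`. -/
theorem stmt11 (N : ℕ) (hN : 1 ≤ N) (p s α β q : ℝ) (hp : 1 < p)
    (hs : s ∈ Set.Ioc (0 : ℝ) 1) (hs1 : 1 / p < s) (hs2 : s < N / p) (hβ : 0 < β)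
    (hα : -(s * p) < α) (hq1 : p < q) (hq2 : q < p * ((N : ℝ) + α) / ((N : ℝ) - s * p))
    (hexp : α - β + (q - p) * ((1 - (N : ℝ)) / p) < 0)
    (u : ℕ → EuclideanSpace ℝ (Fin N) → ℝ)
    (hmem : ∀ n, MemWspBeta N s p β (u n))
    (hbdd : ∃ M : ℝ, ∀ n,
      (∫ x, ‖x‖ ^ β * |u n x| ^ p) ^ (1 / p) + seminormSP N s p (u n) ≤ M)
    (hweak : ∀ φ : EuclideanSpace ℝ (Fin N) → ℝ, Continuous φ → HasCompactSupport φ →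
      Tendsto (fun n => ∫ x, u n x * φ x) atTop (nhds 0)) :
    Tendsto (fun n => ∫⁻ x, ENNReal.ofReal (‖x‖ ^ α * |u n x| ^ q)) atTop (nhds 0) := by
  obtain ⟨M, hM⟩ := hbdd
  have hp0 : 0 < p := one_pos.trans hp
  have : NeZero N := ⟨Nat.one_le_iff_ne_zero.1 hN⟩
  have hsp : 0 < (N : ℝ) - s * p := sub_pos.2 ((lt_div_iff₀ hp0).1 hs2)
  have hqα : ((N : ℝ) - s * p) * q < p * (N + α) := (lt_div_iff₀' hsp).1 hq2
  have hNα : 0 < (N : ℝ) + α :=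
    pos_of_mul_pos_right ((mul_pos hsp (hp0.trans hq1)).trans hqα) hp0.le
  simp_rw [ofReal_mul_abs_rpow (Real.rpow_nonneg (norm_nonneg _) α) (hp0.trans hq1).le]
  have hM_left : ∀ n, (∫ x, ‖x‖ ^ β * |u n x| ^ p) ^ (1 / p) ≤ M := fun n =>
    (le_add_of_nonneg_right (seminormSP_nonneg N s p (u n))).trans (hM n)
  have hM_right : ∀ n, seminormSP N s p (u n) ≤ M := fun n =>
    (le_add_of_nonneg_left (by positivity)).trans (hM n)
  exact stmt11_general volume hp hs1 hβ.le hq1 (by simpa using hNα) (by simpa using hqα)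
    (by simpa using hexp) (fun n => (hmem n).1) (fun n => (hmem n).2.1)
    (fun h n => MemWspBeta.differentiable (h ▸ hmem n))
    (fun n => (hmem n).lintegral_le hp0 (hM_left n))
    (fun n => (hmem n).sobolevEnergy_le hp0 (hM_right n))
    fun w hw hw_compact _ =>
      hweak _ (hw.comp continuous_norm) (hasCompactSupport_comp_norm hw_compact)
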